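/- Let q be a prime power and let ν, m₁, m₂, t be positive integers with m₁ ≥ m₂ ≥ t+1 and 2ν ≥ 2m₁ + m₂ + t + 3, and suppose moreover that m₂ > 2t or (m₁,m₂,t) ∈ {(2,2,1), (3,2,1)}. Suppose ℱ₁ ⊆ 𝒫_{m₁} and ℱ₂ ⊆ 𝒫_{m₂} are non-trivial cross t-intersecting families such that |ℱ₁|·|ℱ₂| ≥ |𝒢₁|·|𝒢₂| for every pair of non-trivial cross t-intersecting families 𝒢₁ ⊆ 𝒫_{m₁}, 𝒢₂ ⊆ 𝒫_{m₂}. Then there exist M ∈ 𝒫_{m₂+1} and a t-dimensional subspace T of M such that either (i) ℱ₁ = 𝒞₁(M,T;m₁,t) and ℱ₂ = 𝒞₂(M,T;m₂), or (ii) m₁ = m₂ and ℱ₁ = 𝒞₂(M,T;m₁) and ℱ₂ = 𝒞₁(M,T;m₂,t). -/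

import Mathlib

open Finset Module

noncomputable section

/-- Gaussian binomial coefficient `[n choose k]_q` as a rational number. -/
def gaussBinom (q n k : ℕ) : ℚ :=
  ∏ i ∈ Finset.range k, ((q : ℚ) ^ ((n : ℤ) - i) - 1) / ((q : ℚ) ^ ((k : ℤ) - i) - 1)

/-- `N'(a; m; 2ν)`, the number of `m`-dim totally isotropic subspaces containing
a fixed `a`-dim one. -/
def Nprime (q a m ν : ℕ) : ℚ :=
  ∏ i ∈ Finset.Icc 1 (m - a), ((q : ℚ) ^ (2 * ((ν : ℤ) - m + i)) - 1) / ((q : ℚ) ^ (i : ℤ) - 1)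

variable {K V : Type*} [Field K] [AddCommGroup V] [Module K V]

/-- A subspace is totally isotropic w.r.t. the bilinear form `f`. -/
def TotallyIsotropic (f : V →ₗ[K] V →ₗ[K] K) (W : Submodule K V) : Prop :=
  ∀ x ∈ W, ∀ y ∈ W, f x y = 0

/-- `polar f m` = `𝒫_m`, the set of `m`-dimensional totally isotropic subspaces. -/
def polar (f : V →ₗ[K] V →ₗ[K] K) (m : ℕ) : Set (Submodule K V) :=
  {W | TotallyIsotropic f W ∧ finrank K W = m}

/-- `X` is a `t`-cover of the family `ℱ`. -/
def IsTCover (f : V →ₗ[K] V →ₗ[K] K) (t : ℕ) (ℱ : Set (Submodule K V))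
    (X : Submodule K V) : Prop :=
  TotallyIsotropic f X ∧ ∀ F ∈ ℱ, t ≤ finrank K ↥(X ⊓ F)

/-- `τ_t(ℱ)`, the minimum dimension of a `t`-cover of `ℱ`. -/
def tauCover (f : V →ₗ[K] V →ₗ[K] K) (t : ℕ) (ℱ : Set (Submodule K V)) : ℕ :=
  sInf {x | ∃ X, IsTCover f t ℱ X ∧ finrank K ↥X = x}

def C1 (f : V →ₗ[K] V →ₗ[K] K) (M T : Submodule K V) (m t : ℕ) : Set (Submodule K V) :=
  {F | F ∈ polar f m ∧ T ≤ F ∧ t + 1 ≤ finrank K ↥(F ⊓ M)}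

def C2 (f : V →ₗ[K] V →ₗ[K] K) (M T : Submodule K V) (m : ℕ) : Set (Submodule K V) :=
  {F | F ∈ polar f m ∧ T ≤ F} ∪ {F | F ∈ polar f m ∧ F ≤ M}

def C3 (f : V →ₗ[K] V →ₗ[K] K) (S : Submodule K V) (m : ℕ) : Set (Submodule K V) :=
  {F | F ∈ polar f m ∧ S ≤ F}

def C4 (f : V →ₗ[K] V →ₗ[K] K) (S : Submodule K V) (m t : ℕ) : Set (Submodule K V) :=
  {F | F ∈ polar f m ∧ t ≤ finrank K ↥(F ⊓ S)}

def s0 (q ν m s t : ℕ) : ℚ :=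
  gaussBinom q (s - t) 1 * Nprime q (t + 1) m ν - q * gaussBinom q (s - t) 2 * Nprime q (t + 2) m ν

/-!
Let `τ(ℱ)` be the least dimension of a `t`-cover of `ℱ`. Counting the members of one family through
the subspaces of a minimal cover of it, and extending each such subspace one dimension at a time
towards a member of the other family that it meets in dimension less than `t`, bounds
`|ℱ₁| · |ℱ₂|` in terms of `τ(ℱ₁)` and `τ(ℱ₂)`. Each extra dimension of the minimal covers lowers
the bound by a power of `q`, so a maximal pair must have `{τ(ℱ₁), τ(ℱ₂)} = {t, t + 1}`: the case
`τ(ℱ₁) = τ(ℱ₂) = t` would make the pair trivial, and all others fall below `|𝒞₁| · |𝒞₂|`.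

Say `τ(ℱ₁) = t`, realised by `T`. Then every member of `ℱ₁` contains `T`, and by maximality so does
every `(t + 1)`-dimensional cover of `ℱ₂`. Let `M` be the span of these covers. A
member of `ℱ₂` not containing `T` meets each of them in a hyperplane, so `M ≤ T ⊔ F` for every such
`F`, and hence `dim M ≤ m₂ + 1`. If `dim M = m₂ + 1`, then `M = T ⊔ F` for all such `F`, which puts
the pair inside `(𝒞₁(M, T), 𝒞₂(M, T))`, and maximality gives equality. If `dim M ≤ m₂`, too few
members of `ℱ₁` meet `M` in more than `T` for the product to reach `|𝒞₁| · |𝒞₂|`; the borderline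
case `dim M = t + 1` uses `m₂ > 2t`, or a finer count of `ℱ₂` for the two exceptional triples.
Finally the pair with the two families interchanged is strictly worse when `m₂ < m₁`.
-/
section QuantumCounts

/-- The `q`-integer `[n] = 1 + q + ⋯ + q ^ (n - 1)`, the number of points of an `n`-dimensional
space over a field with `q` elements. -/
def qNum (q : ℝ) (n : ℕ) : ℝ := ∑ i ∈ range n, q ^ i

/-- The Gaussian binomial coefficient, as a quotient of numbers of linearly independent
`k`-tuples. -/
def qBinom (q : ℝ) (n k : ℕ) : ℝ := ∏ j ∈ range k, (q ^ n - q ^ j) / (q ^ k - q ^ j)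

/-- The number of `m`-dimensional totally isotropic subspaces through a fixed `a`-dimensional
one in a symplectic space of dimension `2 * ν`. Unlike for `Nprime`, the value is `0` when
`m < a`, as the count requires. -/
def isotropicCount (q : ℝ) (ν a m : ℕ) : ℝ :=
  if m < a then 0 else ∏ i ∈ Ico a m, (q ^ (2 * (ν - i)) - 1) / (q ^ (m - i) - 1)

variable {q : ℝ}

theorem qNum_mul_sub_one (q : ℝ) (n : ℕ) : qNum q n * (q - 1) = q ^ n - 1 :=
  geom_sum_mul q n

theorem qNum_succ (q : ℝ) (n : ℕ) : qNum q (n + 1) = q * qNum q n + 1 :=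
  geom_sum_succ

@[simp]
theorem qNum_one (q : ℝ) : qNum q 1 = 1 := by simp [qNum]

theorem qNum_two (q : ℝ) : qNum q 2 = q + 1 := by rw [qNum_succ, qNum_one, mul_one]

theorem qNum_nonneg (hq : 0 ≤ q) (n : ℕ) : 0 ≤ qNum q n :=
  sum_nonneg fun i _ => pow_nonneg hq i

theorem qNum_mono (hq : 0 ≤ q) : Monotone (qNum q) := fun _ _ h =>
  sum_le_sum_of_subset_of_nonneg (range_mono h) fun i _ _ => pow_nonneg hq i

theorem one_le_qNum (hq : 0 ≤ q) {n : ℕ} (hn : 1 ≤ n) : 1 ≤ qNum q n :=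
  qNum_one q ▸ qNum_mono hq hn

theorem qNum_le_pow (hq : 2 ≤ q) (n : ℕ) : qNum q n ≤ q ^ n := by
  have h := mul_le_mul_of_nonneg_left (by linarith : 1 ≤ q - 1) (qNum_nonneg (by linarith) n)
  linarith [qNum_mul_sub_one q n]

theorem pow_le_qNum_succ (hq : 0 ≤ q) (n : ℕ) : q ^ n ≤ qNum q (n + 1) :=
  single_le_sum (f := fun i => q ^ i) (fun i _ => pow_nonneg hq i) (self_mem_range_succ n)

theorem two_mul_qNum_le (hq : 2 ≤ q) {m n : ℕ} (h : m < n) : 2 * qNum q m ≤ qNum q n := by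
  have := qNum_mono (by linarith : 0 ≤ q) h
  have := mul_le_mul_of_nonneg_right hq (qNum_nonneg (by linarith : 0 ≤ q) m)
  linarith [qNum_succ q m]

theorem pow_sub_pow_le_qNum_mul (hq : 1 < q) {b t j : ℕ} (hj : j < t) (hb : t ≤ b) :
    q ^ b - q ^ j ≤ qNum q (b + 1 - t) * (q ^ t - q ^ j) := by
  obtain ⟨u, rfl⟩ := Nat.exists_eq_add_of_lt hj
  obtain ⟨n, rfl⟩ := Nat.exists_eq_add_of_le hb
  rw [show j + u + 1 + n + 1 - (j + u + 1) = n + 1 by omega]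
  have hu : 1 ≤ q ^ u := one_le_pow₀ hq.le
  have hn : 1 ≤ q ^ n := one_le_pow₀ hq.le
  refine le_of_mul_le_mul_right ?_ (sub_pos.2 hq)
  rw [mul_right_comm, qNum_mul_sub_one, ← sub_nonneg]
  calc 0 ≤ q ^ j * q * ((q ^ u - 1) * (q ^ n - 1)) :=
        mul_nonneg (by positivity) (mul_nonneg (by linarith) (by linarith))
    _ = _ := by ring

theorem pow_sub_pow_le_ite_add_div (hq : 1 < q) {t d : ℕ} (h : t ≤ d) :
    q ^ d - q ^ t ≤ (if t + 1 ≤ d then q ^ (t + 1) - q ^ t else 0) +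
      (q ^ d - q ^ t) * (q ^ d - q ^ (t + 1)) / (q ^ (t + 2) - q ^ t) := by
  rcases h.eq_or_lt with rfl | hlt
  · simp
  rw [if_pos (Nat.succ_le_of_lt hlt)]
  rcases (Nat.succ_le_of_lt hlt).eq_or_lt with rfl | hlt'
  · simp
  have hden : 0 < q ^ (t + 2) - q ^ t := sub_pos.2 (pow_lt_pow_right₀ hq (by lia))
  have hd : q ^ (t + 2) ≤ q ^ d := pow_le_pow_right₀ hq.le (by lia)
  have ht : q ^ (t + 1) ≤ q ^ (t + 2) := pow_le_pow_right₀ hq.le (by lia)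
  have hquot : q ^ d - q ^ (t + 1) ≤
      (q ^ d - q ^ t) * (q ^ d - q ^ (t + 1)) / (q ^ (t + 2) - q ^ t) := by
    rw [le_div_iff₀ hden, mul_comm]
    exact mul_le_mul_of_nonneg_right (by linarith) (by linarith)
  linarith

theorem qBinom_self (hq : 1 < q) (n : ℕ) : qBinom q n n = 1 :=
  prod_eq_one fun _ hj =>
    div_self (sub_ne_zero.2 (pow_lt_pow_right₀ hq (mem_range.1 hj)).ne')

theorem qBinom_pos (hq : 1 < q) {n k : ℕ} (h : k ≤ n) : 0 < qBinom q n k := by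
  refine prod_pos fun j hj => ?_
  have hjk := mem_range.1 hj
  exact div_pos (sub_pos.2 (pow_lt_pow_right₀ hq (hjk.trans_le h)))
    (sub_pos.2 (pow_lt_pow_right₀ hq hjk))

theorem prod_range_pow_sub_pow_succ (q : ℝ) (k n : ℕ) :
    (∏ j ∈ range k, (q ^ (n + 1) - q ^ j)) * (q ^ (n + 1) - q ^ k) =
      (q ^ (n + 1) - 1) * (q ^ k * ∏ j ∈ range k, (q ^ n - q ^ j)) := by
  rw [← prod_range_succ, prod_range_succ', mul_comm]
  simp_rw [pow_succ q, mul_comm _ q, ← mul_sub]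
  rw [prod_mul_distrib, prod_const, card_range, pow_zero]

theorem qBinom_succ (hq : 1 < q) (t i : ℕ) :
    qBinom q (t + i + 1) t * (q ^ (i + 1) - 1) = (q ^ (t + i + 1) - 1) * qBinom q (t + i) t := by
  have h := prod_range_pow_sub_pow_succ q t (t + i)
  have hqt : q ^ t ≠ 0 := by positivity
  simp only [qBinom, prod_div_distrib]
  rw [div_mul_eq_mul_div, ← mul_div_assoc]
  congr 1
  apply mul_left_cancel₀ hqt
  linear_combination h

theorem qBinom_succ_self (hq : 1 < q) (t : ℕ) : qBinom q (t + 1) t = qNum q (t + 1) := by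
  have h := qBinom_succ hq t 0
  simp only [add_zero, zero_add, pow_one, qBinom_self hq, mul_one, ← qNum_mul_sub_one] at h
  exact mul_right_cancel₀ (sub_pos.2 hq).ne' h

theorem qBinom_succ_le (hq : 2 ≤ q) (t i : ℕ) :
    qBinom q (t + i + 1) t ≤ q ^ (t + 1) * qBinom q (t + i) t := by
  have hi : 2 ≤ q ^ (i + 1) := hq.trans (le_self_pow₀ (by linarith) i.succ_ne_zero)
  have hb := qBinom_pos (by linarith : 1 < q) (Nat.le_add_right t i)
  have ht : 0 < q ^ t := by positivity
  have hcoef : q ^ (t + i + 1) - 1 ≤ q ^ (t + 1) * (q ^ (i + 1) - 1) := by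
    rw [add_assoc, pow_add, pow_succ q t]
    nlinarith [mul_le_mul_of_nonneg_left hq ht.le]
  refine le_of_mul_le_mul_right ?_ (by linarith : 0 < q ^ (i + 1) - 1)
  rw [qBinom_succ (by linarith)]
  calc _ ≤ _ := mul_le_mul_of_nonneg_right hcoef hb.le
    _ = _ := by ring

@[simp]
theorem isotropicCount_self (q : ℝ) (ν m : ℕ) : isotropicCount q ν m m = 1 := by
  simp [isotropicCount]

theorem isotropicCount_of_lt (q : ℝ) (ν : ℕ) {a m : ℕ} (h : m < a) :
    isotropicCount q ν a m = 0 := if_pos h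

theorem isotropicCount_mul_pow_sub_one (hq : 1 < q) (ν : ℕ) {a m : ℕ} (h : a < m) :
    isotropicCount q ν a m * (q ^ (m - a) - 1) =
      (q ^ (2 * (ν - a)) - 1) * isotropicCount q ν (a + 1) m := by
  have hden : q ^ (m - a) - 1 ≠ 0 := (sub_pos.2 (one_lt_pow₀ hq (by lia))).ne'
  rw [isotropicCount, if_neg h.not_gt, isotropicCount, if_neg (Nat.succ_le_of_lt h).not_gt,
    prod_eq_prod_Ico_succ_bot h]
  field_simp

theorem isotropicCount_nonneg (hq : 1 ≤ q) (ν a m : ℕ) : 0 ≤ isotropicCount q ν a m := by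
  unfold isotropicCount
  split_ifs
  · rfl
  · exact prod_nonneg fun i _ =>
      div_nonneg (sub_nonneg.2 (one_le_pow₀ hq)) (sub_nonneg.2 (one_le_pow₀ hq))

theorem isotropicCount_pos (hq : 1 < q) {ν a m : ℕ} (h : a ≤ m) (hm : m ≤ ν) :
    0 < isotropicCount q ν a m := by
  rw [isotropicCount, if_neg h.not_gt]
  refine prod_pos fun i hi => ?_
  have him := (mem_Ico.1 hi).2
  exact div_pos (sub_pos.2 (one_lt_pow₀ hq (by lia))) (sub_pos.2 (one_lt_pow₀ hq (by lia)))

theorem pow_mul_isotropicCount_succ_le (hq : 1 < q) {ν a m e : ℕ} (hm : m ≤ ν)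
    (he : e + a + m ≤ 2 * ν) :
    q ^ e * isotropicCount q ν (a + 1) m ≤ isotropicCount q ν a m := by
  rcases lt_or_ge a m with ham | hma
  · have hpow : q ^ e * q ^ (m - a) ≤ q ^ (2 * (ν - a)) := by
      rw [← pow_add]; exact pow_le_pow_right₀ hq.le (by lia)
    have hcoef : q ^ e * (q ^ (m - a) - 1) ≤ q ^ (2 * (ν - a)) - 1 := by
      linarith [one_le_pow₀ hq.le (n := e)]
    refine le_of_mul_le_mul_right ?_ (sub_pos.2 (one_lt_pow₀ hq (by omega : m - a ≠ 0)))
    rw [isotropicCount_mul_pow_sub_one hq ν ham, mul_right_comm]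
    exact mul_le_mul_of_nonneg_right hcoef (isotropicCount_nonneg hq.le ..)
  · rw [isotropicCount_of_lt q ν (by omega : m < a + 1), mul_zero]
    exact isotropicCount_nonneg hq.le ..

theorem pow_mul_qNum_mul_isotropicCount_succ_le (hq : 2 ≤ q) {ν a m e n : ℕ} (hm : m ≤ ν)
    (he : e + n + a + m ≤ 2 * ν) :
    q ^ e * (qNum q n * isotropicCount q ν (a + 1) m) ≤ isotropicCount q ν a m :=
  calc q ^ e * (qNum q n * isotropicCount q ν (a + 1) m)
      ≤ q ^ e * (q ^ n * isotropicCount q ν (a + 1) m) := by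
        gcongr
        · exact isotropicCount_nonneg (by linarith) ..
        · exact qNum_le_pow hq n
    _ = q ^ (e + n) * isotropicCount q ν (a + 1) m := by ring
    _ ≤ _ := pow_mul_isotropicCount_succ_le (by linarith) hm he

theorem sixteen_mul_pow_mul_qNum_mul_isotropicCount_succ_le (hq : 2 ≤ q) {ν a m e n : ℕ}
    (hm : m ≤ ν) (he : e + n + a + m + 4 ≤ 2 * ν) :
    16 * q ^ e * (qNum q n * isotropicCount q ν (a + 1) m) ≤ isotropicCount q ν a m := by
  have hcount := mul_nonneg (qNum_nonneg (by linarith : 0 ≤ q) n)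
    (isotropicCount_nonneg (by linarith : 1 ≤ q) ν (a + 1) m)
  calc 16 * q ^ e * (qNum q n * isotropicCount q ν (a + 1) m)
      = 2 ^ 4 * q ^ e * (qNum q n * isotropicCount q ν (a + 1) m) := by norm_num
    _ ≤ q ^ 4 * q ^ e * (qNum q n * isotropicCount q ν (a + 1) m) := by gcongr
    _ ≤ isotropicCount q ν a m := by
        rw [← pow_add]
        exact pow_mul_qNum_mul_isotropicCount_succ_le hq hm (by lia)

theorem add_one_mul_isotropicCount_succ_lt (hq : 2 ≤ q) {ν a m : ℕ} (ham : a + 1 ≤ m)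
    (hm : m ≤ ν) (h : 2 + a + m ≤ 2 * ν) :
    (q + 1) * isotropicCount q ν (a + 1) m < isotropicCount q ν a m :=
  (mul_lt_mul_of_pos_right (by nlinarith) (isotropicCount_pos (by linarith) ham hm)).trans_le
    (pow_mul_isotropicCount_succ_le (by linarith) hm h)

end QuantumCounts

section TotallyIsotropic

/-- `f` is a nondegenerate alternating form on a space of dimension `2 * ν`. -/
structure IsSymplectic (f : V →ₗ[K] V →ₗ[K] K) (ν : ℕ) : Prop where
  alt : f.IsAlt
  separating : f.SeparatingLeft
  finrank_eq : finrank K V = 2 * ν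

variable {f : V →ₗ[K] V →ₗ[K] K} {X Y : Submodule K V}

theorem sup_span_singleton_le_iff {v : V} :
    X ⊔ Submodule.span K {v} ≤ Y ↔ X ≤ Y ∧ v ∈ Y := by
  rw [sup_le_iff, Submodule.span_singleton_le_iff_mem]

theorem exists_le_finrank_eq {n : ℕ} (h : n ≤ finrank K X) :
    ∃ U : Submodule K V, U ≤ X ∧ finrank K U = n := by
  obtain ⟨s, hs⟩ := exists_linearIndependent_of_le_finrank h
  refine ⟨(Submodule.span K (Set.range s)).map X.subtype, Submodule.map_subtype_le _ _, ?_⟩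
  rw [Submodule.finrank_map_subtype_eq, finrank_span_eq_card hs, Fintype.card_fin]

theorem TotallyIsotropic.mono (hY : TotallyIsotropic f Y) (h : X ≤ Y) : TotallyIsotropic f X :=
  fun x hx y hy => hY x (h hx) y (h hy)

theorem TotallyIsotropic.sup (hf : f.IsAlt) (hX : TotallyIsotropic f X)
    (hY : TotallyIsotropic f Y) (hXY : ∀ x ∈ X, ∀ y ∈ Y, f x y = 0) :
    TotallyIsotropic f (X ⊔ Y) := by
  intro u hu w hw
  obtain ⟨x, hx, y, hy, rfl⟩ := Submodule.mem_sup.1 hu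
  obtain ⟨x', hx', y', hy', rfl⟩ := Submodule.mem_sup.1 hw
  simp [hX x hx x' hx', hXY x hx y' hy', ← hf.neg x' y, hXY x' hx' y hy, hY y hy y' hy']

theorem totallyIsotropic_span_singleton (hf : f.IsAlt) (v : V) :
    TotallyIsotropic f (Submodule.span K {v}) := by
  intro x hx y hy
  obtain ⟨c, rfl⟩ := Submodule.mem_span_singleton.1 hx
  obtain ⟨d, rfl⟩ := Submodule.mem_span_singleton.1 hy
  simp [hf v]

theorem TotallyIsotropic.sup_span_singleton (hf : f.IsAlt) (hX : TotallyIsotropic f X) {v : V}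
    (hv : ∀ x ∈ X, f x v = 0) : TotallyIsotropic f (X ⊔ Submodule.span K {v}) := by
  refine hX.sup hf (totallyIsotropic_span_singleton hf v) fun x hx y hy => ?_
  obtain ⟨c, rfl⟩ := Submodule.mem_span_singleton.1 hy
  rw [map_smul, hv x hx, smul_zero]

theorem IsSymplectic.finrank_orthogonal [FiniteDimensional K V] {ν : ℕ} (hf : IsSymplectic f ν)
    (X : Submodule K V) :
    finrank K (LinearMap.BilinForm.orthogonal f X) = 2 * ν - finrank K X := by
  rw [LinearMap.BilinForm.finrank_orthogonal
    (hf.alt.isRefl.nondegenerate_iff_separatingLeft.2 hf.separating), hf.finrank_eq]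

end TotallyIsotropic

section DoubleCounting

/-- The members of `𝒜` containing `X`. -/
def through (𝒜 : Set (Submodule K V)) (X : Submodule K V) : Set (Submodule K V) :=
  {A ∈ 𝒜 | X ≤ A}

variable {𝒜 ℬ : Set (Submodule K V)} {X Y : Submodule K V}

theorem through_eq_self_iff : through 𝒜 X = 𝒜 ↔ ∀ A ∈ 𝒜, X ≤ A := Set.sep_eq_self_iff_mem_true

theorem through_mono (h : 𝒜 ⊆ ℬ) (X : Submodule K V) : through 𝒜 X ⊆ through ℬ X :=
  fun _ hA => ⟨h hA.1, hA.2⟩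

theorem through_subset (𝒜 : Set (Submodule K V)) (X : Submodule K V) : through 𝒜 X ⊆ 𝒜 :=
  Set.sep_subset _ _

theorem through_eq_empty_of_not_totallyIsotropic {f : V →ₗ[K] V →ₗ[K] K} {m : ℕ}
    (h𝒜 : 𝒜 ⊆ polar f m) (hX : ¬ TotallyIsotropic f X) : through 𝒜 X = ∅ :=
  Set.eq_empty_of_forall_notMem fun _ hA => hX ((h𝒜 hA.1).1.mono hA.2)

local notation "q" => (Nat.card K : ℝ)

variable [Finite V]

theorem ncard_coe_sdiff (W X : Submodule K V) :
    (((W : Set V) \ X).ncard : ℝ) = q ^ finrank K W - q ^ finrank K ↥(W ⊓ X) := by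
  have hcard (Y : Submodule K V) : ((Y : Set V).ncard : ℝ) = q ^ finrank K Y := by
    rw [← Nat.card_coe_set_eq]
    exact_mod_cast natCard_eq_pow_finrank (K := K) (V := Y)
  rw [← hcard, ← hcard, eq_sub_iff_add_eq', Submodule.coe_inf]
  exact_mod_cast Set.ncard_inter_add_ncard_sdiff_eq_ncard (W : Set V) X

/-- Double counting of the pairs `(A, v)` with `X ⊔ ⟨v⟩ ≤ A` and `v ∈ W \ X`, weighted by `w`. -/
theorem sum_through_mul (𝒜 : Set (Submodule K V)) (X W : Submodule K V)
    (w : Submodule K V → ℝ) :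
    ∑ A ∈ (through 𝒜 X).toFinite.toFinset,
        (q ^ finrank K ↥(A ⊓ W) - q ^ finrank K ↥(W ⊓ X)) * w A =
      ∑ v ∈ ((W : Set V) \ X).toFinite.toFinset,
        ∑ A ∈ (through 𝒜 (X ⊔ Submodule.span K {v})).toFinite.toFinset, w A := by
  rw [← sum_comm' (t := fun A => (((A ⊓ W : Submodule K V) : Set V) \ X).toFinite.toFinset)
    (s := (through 𝒜 X).toFinite.toFinset) (f := fun A _ => w A)]
  · refine sum_congr rfl fun A hA => ?_
    have hXA : X ≤ A := ((Set.Finite.mem_toFinset _).1 hA).2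
    rw [sum_const, nsmul_eq_mul, ← Set.ncard_eq_toFinset_card _, ncard_coe_sdiff, inf_assoc,
      inf_eq_right.2 (inf_le_right.trans hXA : W ⊓ X ≤ A)]
  · intro A v
    simp only [Set.Finite.mem_toFinset, through, Set.mem_sep_iff, sup_span_singleton_le_iff,
      Submodule.coe_inf, Set.mem_sdiff, Set.mem_inter_iff, SetLike.mem_coe]
    tauto

variable [Finite K]

theorem two_le_natCard (K : Type*) [Field K] [Finite K] : (2 : ℝ) ≤ Nat.card K := by
  exact_mod_cast Finite.one_lt_card (α := K)

theorem one_lt_natCard (K : Type*) [Field K] [Finite K] : (1 : ℝ) < Nat.card K := by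
  linarith [two_le_natCard K]

theorem ncard_through_mul_le_sum {W : Submodule K V} {s : ℕ} {c : V → ℝ}
    (hs : ∀ A ∈ through 𝒜 X, s ≤ finrank K ↥(A ⊓ W))
    (hc : ∀ v ∈ W, v ∉ X → ((through 𝒜 (X ⊔ Submodule.span K {v})).ncard : ℝ) ≤ c v) :
    (through 𝒜 X).ncard * (q ^ s - q ^ finrank K ↥(W ⊓ X)) ≤
      ∑ v ∈ ((W : Set V) \ X).toFinite.toFinset, c v :=
  calc ((through 𝒜 X).ncard : ℝ) * (q ^ s - q ^ finrank K ↥(W ⊓ X))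
      = ∑ _A ∈ (through 𝒜 X).toFinite.toFinset, (q ^ s - q ^ finrank K ↥(W ⊓ X)) := by
        rw [sum_const, nsmul_eq_mul, ← Set.ncard_eq_toFinset_card _]
    _ ≤ ∑ A ∈ (through 𝒜 X).toFinite.toFinset,
          (q ^ finrank K ↥(A ⊓ W) - q ^ finrank K ↥(W ⊓ X)) * 1 := by
        refine sum_le_sum fun A hA => ?_
        have := pow_le_pow_right₀ (one_lt_natCard K).le (hs A ((Set.Finite.mem_toFinset _).1 hA))
        linarith
    _ ≤ ∑ v ∈ ((W : Set V) \ X).toFinite.toFinset, c v := by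
        rw [sum_through_mul 𝒜 X W fun _ => 1]
        refine sum_le_sum fun v hv => ?_
        obtain ⟨hvW, hvX⟩ := (Set.Finite.mem_toFinset _).1 hv
        rw [sum_const, nsmul_eq_mul, mul_one, ← Set.ncard_eq_toFinset_card _]
        exact hc v hvW hvX

theorem ncard_through_mul_le {W : Submodule K V} {s : ℕ} {c : ℝ}
    (hs : ∀ A ∈ through 𝒜 X, s ≤ finrank K ↥(A ⊓ W))
    (hc : ∀ v ∈ W, v ∉ X → ((through 𝒜 (X ⊔ Submodule.span K {v})).ncard : ℝ) ≤ c) :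
    (through 𝒜 X).ncard * (q ^ s - q ^ finrank K ↥(W ⊓ X)) ≤
      (q ^ finrank K W - q ^ finrank K ↥(W ⊓ X)) * c := by
  refine (ncard_through_mul_le_sum hs hc).trans_eq ?_
  rw [sum_const, nsmul_eq_mul, ← Set.ncard_eq_toFinset_card _, ncard_coe_sdiff]

theorem ncard_through_le_qNum_mul {W : Submodule K V} {s : ℕ} {c : ℝ} (hc₀ : 0 ≤ c)
    (hs : ∀ A ∈ through 𝒜 X, s ≤ finrank K ↥(A ⊓ W)) (hX : finrank K ↥(X ⊓ W) < s)
    (hW : s ≤ finrank K W)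
    (hc : ∀ v ∈ W, v ∉ X → ((through 𝒜 (X ⊔ Submodule.span K {v})).ncard : ℝ) ≤ c) :
    (through 𝒜 X).ncard ≤ qNum q (finrank K W + 1 - s) * c := by
  rw [inf_comm] at hX
  refine le_of_mul_le_mul_right ((ncard_through_mul_le hs hc).trans ?_)
    (sub_pos.2 (pow_lt_pow_right₀ (one_lt_natCard K) hX))
  calc _ ≤ _ := mul_le_mul_of_nonneg_right
        (pow_sub_pow_le_qNum_mul (one_lt_natCard K) hX hW) hc₀
    _ = _ := by ring

theorem ncard_through_le_prod_mul {S : Submodule K V} {s : ℕ} {c : ℝ}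
    (hs : ∀ A ∈ 𝒜, s ≤ finrank K ↥(A ⊓ S))
    (hc : ∀ U ≤ S, finrank K U = s → ((through 𝒜 U).ncard : ℝ) ≤ c)
    (hXS : X ≤ S) (hX : finrank K X ≤ s) :
    (through 𝒜 X).ncard ≤
      (∏ j ∈ Ico (finrank K X) s, (q ^ finrank K S - q ^ j) / (q ^ s - q ^ j)) * c := by
  obtain ⟨d, hd⟩ := Nat.exists_eq_add_of_le hX
  induction d generalizing X with
  | zero => simpa [hd] using hc X hXS (by lia)
  | succ d ih =>
    have hlt : finrank K X < s := by omega
    have hsX : ∀ A ∈ through 𝒜 X, s ≤ finrank K ↥(A ⊓ S) := fun A hA => hs A hA.1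
    have step := ncard_through_mul_le hsX fun v hvS hvX => by
      have hrank := Submodule.finrank_sup_span_singleton hvX
      have := ih (sup_span_singleton_le_iff.2 ⟨hXS, hvS⟩) (by lia) (by lia)
      rwa [hrank] at this
    rw [inf_eq_right.2 hXS] at step
    rw [prod_eq_prod_Ico_succ_bot hlt, div_mul_eq_mul_div, div_mul_eq_mul_div, mul_assoc,
      le_div_iff₀ (sub_pos.2 (pow_lt_pow_right₀ (one_lt_natCard K) hlt))]
    exact step

theorem ncard_le_qBinom_mul {S : Submodule K V} {s : ℕ} {c : ℝ}
    (hs : ∀ A ∈ 𝒜, s ≤ finrank K ↥(A ⊓ S))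
    (hc : ∀ U ≤ S, finrank K U = s → ((through 𝒜 U).ncard : ℝ) ≤ c) :
    𝒜.ncard ≤ qBinom q (finrank K S) s * c := by
  have h := ncard_through_le_prod_mul hs hc (bot_le : (⊥ : Submodule K V) ≤ S) (by simp)
  rwa [through_eq_self_iff.2 fun _ _ => bot_le, finrank_bot, Nat.Ico_zero_eq_range] at h

end DoubleCounting

section SymplecticCounting

local notation "q" => (Nat.card K : ℝ)

variable [Finite V] {f : V →ₗ[K] V →ₗ[K] K} {ν m : ℕ} {X : Submodule K V}

theorem through_polar_finrank (hX : TotallyIsotropic f X) :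
    through (polar f (finrank K X)) X = {X} := by
  ext A
  refine ⟨fun hA => (Submodule.eq_of_le_of_finrank_le hA.2 hA.1.2.le).symm, ?_⟩
  rintro rfl
  exact ⟨⟨hX, rfl⟩, le_rfl⟩

theorem ncard_through_polar_mul (hf : IsSymplectic f ν) (hX : TotallyIsotropic f X) {c : ℝ}
    (hc : ∀ v ∈ LinearMap.BilinForm.orthogonal f X, v ∉ X →
      ((through (polar f m) (X ⊔ Submodule.span K {v})).ncard : ℝ) = c) :
    (through (polar f m) X).ncard * (q ^ m - q ^ finrank K X) =
      (q ^ (2 * ν - finrank K X) - q ^ finrank K X) * c := by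
  set W := LinearMap.BilinForm.orthogonal f X
  have hXW : X ≤ W := fun v hv x hx => hX x hx v hv
  have hA : ∀ A ∈ (through (polar f m) X).toFinite.toFinset,
      (q ^ finrank K ↥(A ⊓ W) - q ^ finrank K X) * 1 = q ^ m - q ^ finrank K X := by
    intro A hA
    obtain ⟨hA, hXA⟩ := (Set.Finite.mem_toFinset _).1 hA
    have hAW : A ≤ W := fun v hv x hx => hA.1 x (hXA hx) v hv
    rw [inf_eq_left.2 hAW, hA.2, mul_one]
  have hv : ∀ v ∈ ((W : Set V) \ X).toFinite.toFinset,
      ∑ _A ∈ (through (polar f m) (X ⊔ Submodule.span K {v})).toFinite.toFinset, (1 : ℝ) = c := by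
    intro v hv
    obtain ⟨hvW, hvX⟩ := (Set.Finite.mem_toFinset _).1 hv
    rw [sum_const, nsmul_eq_mul, mul_one, ← Set.ncard_eq_toFinset_card _, hc v hvW hvX]
  have h := sum_through_mul (polar f m) X W fun _ => 1
  rwa [inf_eq_right.2 hXW, sum_congr rfl hA, sum_congr rfl hv, sum_const, sum_const,
    nsmul_eq_mul, nsmul_eq_mul, ← Set.ncard_eq_toFinset_card _, ← Set.ncard_eq_toFinset_card _,
    ncard_coe_sdiff, inf_eq_right.2 hXW, hf.finrank_orthogonal] at h

variable [Finite K]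

theorem ncard_through_polar (hf : IsSymplectic f ν) (hm : m ≤ ν) (hX : TotallyIsotropic f X) :
    ((through (polar f m) X).ncard : ℝ) = isotropicCount q ν (finrank K X) m := by
  rcases lt_or_ge m (finrank K X) with hmX | hXm
  · rw [isotropicCount_of_lt q ν hmX, Nat.cast_eq_zero, Set.ncard_eq_zero]
    refine Set.eq_empty_of_forall_notMem fun A hA => ?_
    exact hmX.not_ge (hA.1.2 ▸ Submodule.finrank_mono hA.2)
  obtain ⟨d, hd⟩ := Nat.exists_eq_add_of_le hXm
  induction d generalizing X with
  | zero => simp [show m = finrank K X by omega, through_polar_finrank hX]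
  | succ d ih =>
    have hq := one_lt_natCard K
    have step := ncard_through_polar_mul hf hX fun v hv hvX => by
      have hrank := Submodule.finrank_sup_span_singleton hvX
      have := ih (hX.sup_span_singleton hf.alt hv) (by lia) (by lia)
      rwa [hrank] at this
    have hlow : q ^ m - q ^ finrank K X = q ^ finrank K X * (q ^ (m - finrank K X) - 1) := by
      rw [mul_sub, ← pow_add, Nat.add_sub_cancel' hXm, mul_one]
    have hup : q ^ (2 * ν - finrank K X) - q ^ finrank K X =
        q ^ finrank K X * (q ^ (2 * (ν - finrank K X)) - 1) := by
      rw [mul_sub, ← pow_add, mul_one]; congr 2; omega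
    have hpos : 0 < q ^ finrank K X * (q ^ (m - finrank K X) - 1) :=
      mul_pos (by positivity) (sub_pos.2 (one_lt_pow₀ hq (by lia)))
    refine mul_right_cancel₀ hpos.ne' ?_
    rw [← hlow, step, hup, hlow, mul_left_comm,
      isotropicCount_mul_pow_sub_one hq ν (by omega : finrank K X < m), mul_assoc]

theorem ncard_through_le (hf : IsSymplectic f ν) (hm : m ≤ ν) {𝒜 : Set (Submodule K V)}
    (h𝒜 : 𝒜 ⊆ polar f m) (X : Submodule K V) :
    ((through 𝒜 X).ncard : ℝ) ≤ isotropicCount q ν (finrank K X) m := by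
  by_cases hX : TotallyIsotropic f X
  · rw [← ncard_through_polar hf hm hX]
    exact_mod_cast Set.ncard_le_ncard (through_mono h𝒜 X)
  · rw [through_eq_empty_of_not_totallyIsotropic h𝒜 hX, Set.ncard_empty, Nat.cast_zero]
    exact isotropicCount_nonneg (one_lt_natCard K).le ..

theorem ncard_through_sup_span_le (hf : IsSymplectic f ν) (hm : m ≤ ν)
    {𝒜 : Set (Submodule K V)} (h𝒜 : 𝒜 ⊆ polar f m) {v : V} (hv : v ∉ X) :
    ((through 𝒜 (X ⊔ Submodule.span K {v})).ncard : ℝ) ≤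
      isotropicCount q ν (finrank K X + 1) m := by
  rw [← Submodule.finrank_sup_span_singleton hv]
  exact ncard_through_le hf hm h𝒜 _

theorem polar_nonempty (hf : IsSymplectic f ν) (hm : m ≤ ν) : (polar f m).Nonempty := by
  have hcard := ncard_through_polar hf hm (X := ⊥) (by simp [TotallyIsotropic])
  have hpos := isotropicCount_pos (one_lt_natCard K) (Nat.zero_le m) hm
  rw [finrank_bot] at hcard
  rw [← hcard, Nat.cast_pos, Set.ncard_pos] at hpos
  exact hpos.mono (through_subset _ _)

variable {M T : Submodule K V}

theorem sum_through_polar_pow_sub (hf : IsSymplectic f ν) (hm : m ≤ ν)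
    (hM : TotallyIsotropic f M) (hXM : X ≤ M) :
    ∑ A ∈ (through (polar f m) X).toFinite.toFinset,
        (q ^ finrank K ↥(A ⊓ M) - q ^ finrank K X) =
      (q ^ finrank K M - q ^ finrank K X) * isotropicCount q ν (finrank K X + 1) m := by
  have h := sum_through_mul (polar f m) X M fun _ => 1
  rw [inf_eq_right.2 hXM] at h
  simp only [mul_one] at h
  rw [h, sum_congr rfl fun v hv => ?_, sum_const, nsmul_eq_mul, ← Set.ncard_eq_toFinset_card _,
    ncard_coe_sdiff, inf_eq_right.2 hXM]
  obtain ⟨hvM, hvX⟩ := (Set.Finite.mem_toFinset _).1 hv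
  rw [sum_const, nsmul_eq_mul, mul_one, ← Set.ncard_eq_toFinset_card _,
    ncard_through_polar hf hm (hM.mono (sup_span_singleton_le_iff.2 ⟨hXM, hvM⟩)),
    Submodule.finrank_sup_span_singleton hvX]

theorem sum_through_polar_pow_sub_mul_pow_sub (hf : IsSymplectic f ν) (hm : m ≤ ν)
    (hM : TotallyIsotropic f M) (hXM : X ≤ M) :
    ∑ A ∈ (through (polar f m) X).toFinite.toFinset,
        (q ^ finrank K ↥(A ⊓ M) - q ^ finrank K X) *
          (q ^ finrank K ↥(A ⊓ M) - q ^ (finrank K X + 1)) =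
      (q ^ finrank K M - q ^ finrank K X) * ((q ^ finrank K M - q ^ (finrank K X + 1)) *
        isotropicCount q ν (finrank K X + 2) m) := by
  have h := sum_through_mul (polar f m) X M
    fun A => q ^ finrank K ↥(A ⊓ M) - q ^ (finrank K X + 1)
  rw [inf_eq_right.2 hXM] at h
  rw [h, sum_congr rfl fun v hv => ?_, sum_const, nsmul_eq_mul, ← Set.ncard_eq_toFinset_card _,
    ncard_coe_sdiff, inf_eq_right.2 hXM]
  obtain ⟨hvM, hvX⟩ := (Set.Finite.mem_toFinset _).1 hv
  have := sum_through_polar_pow_sub hf hm hM (sup_span_singleton_le_iff.2 ⟨hXM, hvM⟩)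
  rwa [Submodule.finrank_sup_span_singleton hvX] at this

theorem pow_sub_pow_mul_isotropicCount_le (hf : IsSymplectic f ν) (hm : m ≤ ν)
    (hM : TotallyIsotropic f M) (hTM : T ≤ M) :
    (q ^ finrank K M - q ^ finrank K T) * isotropicCount q ν (finrank K T + 1) m ≤
      (C1 f M T m (finrank K T)).ncard * (q ^ (finrank K T + 1) - q ^ finrank K T) +
      (q ^ finrank K M - q ^ finrank K T) * ((q ^ finrank K M - q ^ (finrank K T + 1)) *
        isotropicCount q ν (finrank K T + 2) m) / (q ^ (finrank K T + 2) - q ^ finrank K T) := by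
  classical
  have hC1 : (through (polar f m) T).toFinite.toFinset.filter
      (fun A => finrank K T + 1 ≤ finrank K ↥(A ⊓ M)) =
        (C1 f M T m (finrank K T)).toFinite.toFinset := by
    ext A
    simp only [mem_filter, Set.Finite.mem_toFinset, through, C1, Set.mem_ofPred_eq, and_assoc]
  rw [← sum_through_polar_pow_sub hf hm hM hTM,
    ← sum_through_polar_pow_sub_mul_pow_sub hf hm hM hTM,
    Set.ncard_eq_toFinset_card _, ← hC1, ← nsmul_eq_mul, ← sum_const, sum_filter, sum_div,
    ← sum_add_distrib]
  refine sum_le_sum fun A hA => pow_sub_pow_le_ite_add_div (one_lt_natCard K) ?_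
  exact Submodule.finrank_mono (le_inf ((Set.Finite.mem_toFinset _).1 hA).2 hTM)

theorem le_ncard_C1 (hf : IsSymplectic f ν) (hm : m ≤ ν) (hM : TotallyIsotropic f M)
    (hTM : T ≤ M) {t n : ℕ} (hT : finrank K T = t) (hMn : finrank K M = t + (n + 1)) :
    qNum q (n + 1) * (isotropicCount q ν (t + 1) m -
      q * qNum q n / (q + 1) * isotropicCount q ν (t + 2) m) ≤ (C1 f M T m t).ncard := by
  have h := pow_sub_pow_mul_isotropicCount_le hf hm hM hTM
  rw [hT, hMn] at h
  have hq := one_lt_natCard K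
  have hden : q - 1 ≠ 0 := (sub_pos.2 hq).ne'
  have hMT : q ^ (t + (n + 1)) - q ^ t = q ^ t * (qNum q (n + 1) * (q - 1)) := by
    rw [qNum_mul_sub_one]; ring
  have hMT' : q ^ (t + (n + 1)) - q ^ (t + 1) = q ^ t * q * (qNum q n * (q - 1)) := by
    rw [qNum_mul_sub_one]; ring
  rw [hMT, hMT', show q ^ (t + 1) - q ^ t = q ^ t * (q - 1) by ring,
    show q ^ (t + 2) - q ^ t = q ^ t * ((q - 1) * (q + 1)) by ring] at h
  refine le_of_mul_le_mul_right ?_ (mul_pos (by positivity) (sub_pos.2 hq) : 0 < q ^ t * (q - 1))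
  rw [← sub_le_iff_le_add] at h
  refine Eq.trans_le ?_ h
  field_simp

end SymplecticCounting

section CrossIntersecting

/-- `𝒜 ⊆ 𝒫_a` and `ℬ ⊆ 𝒫_b` are cross `t`-intersecting families. -/
structure IsCrossPair (f : V →ₗ[K] V →ₗ[K] K) (a b t : ℕ) (𝒜 ℬ : Set (Submodule K V)) :
    Prop where
  left_subset : 𝒜 ⊆ polar f a
  right_subset : ℬ ⊆ polar f b
  le_finrank_inf : ∀ A ∈ 𝒜, ∀ B ∈ ℬ, t ≤ finrank K ↥(A ⊓ B)

/-- A cross `t`-intersecting pair with no common totally isotropic `t`-space. -/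
structure IsNontrivialCrossPair (f : V →ₗ[K] V →ₗ[K] K) (a b t : ℕ)
    (𝒜 ℬ : Set (Submodule K V)) : Prop extends IsCrossPair f a b t 𝒜 ℬ where
  nontrivial : ¬ ∃ T ∈ polar f t, (∀ A ∈ 𝒜, T ≤ A) ∧ ∀ B ∈ ℬ, T ≤ B

/-- A non-trivial cross `t`-intersecting pair maximising the product of the sizes. -/
structure IsMaxPair (f : V →ₗ[K] V →ₗ[K] K) (a b t : ℕ) (𝒜 ℬ : Set (Submodule K V)) : Prop
    extends IsNontrivialCrossPair f a b t 𝒜 ℬ where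
  ncard_mul_le : ∀ 𝒢 ℋ : Set (Submodule K V), IsNontrivialCrossPair f a b t 𝒢 ℋ →
    𝒢.ncard * ℋ.ncard ≤ 𝒜.ncard * ℬ.ncard

variable {f : V →ₗ[K] V →ₗ[K] K} {a b t : ℕ} {𝒜 ℬ : Set (Submodule K V)}

theorem IsCrossPair.symm (h : IsCrossPair f a b t 𝒜 ℬ) : IsCrossPair f b a t ℬ 𝒜 :=
  ⟨h.right_subset, h.left_subset, fun B hB A hA => inf_comm A B ▸ h.le_finrank_inf A hA B hB⟩

theorem IsNontrivialCrossPair.symm (h : IsNontrivialCrossPair f a b t 𝒜 ℬ) :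
    IsNontrivialCrossPair f b a t ℬ 𝒜 :=
  ⟨h.toIsCrossPair.symm, fun ⟨T, hT, hTℬ, hT𝒜⟩ => h.nontrivial ⟨T, hT, hT𝒜, hTℬ⟩⟩

theorem IsMaxPair.symm (h : IsMaxPair f a b t 𝒜 ℬ) : IsMaxPair f b a t ℬ 𝒜 where
  toIsNontrivialCrossPair := h.toIsNontrivialCrossPair.symm
  ncard_mul_le 𝒢 ℋ hpair := by
    simpa only [mul_comm] using h.ncard_mul_le ℋ 𝒢 hpair.symm

theorem IsMaxPair.mem_right [Finite V] (h : IsMaxPair f a b t 𝒜 ℬ) (h𝒜 : 𝒜.Nonempty)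
    {F : Submodule K V} (hF : F ∈ polar f b) (hc : ∀ A ∈ 𝒜, t ≤ finrank K ↥(A ⊓ F)) : F ∈ ℬ := by
  by_contra hFℬ
  have hinsert : IsNontrivialCrossPair f a b t 𝒜 (insert F ℬ) :=
    { left_subset := h.left_subset
      right_subset := Set.insert_subset hF h.right_subset
      le_finrank_inf := fun A hA => Set.forall_mem_insert.2 ⟨hc A hA, h.le_finrank_inf A hA⟩
      nontrivial := fun ⟨T, hT, hT𝒜, hTℬ⟩ =>
        h.nontrivial ⟨T, hT, hT𝒜, (Set.forall_mem_insert.1 hTℬ).2⟩ }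
  have hle := h.ncard_mul_le _ _ hinsert
  rw [Set.ncard_insert_of_notMem hFℬ] at hle
  have hpos := (Set.ncard_pos 𝒜.toFinite).2 h𝒜
  nlinarith

theorem IsCrossPair.isTCover_right (h : IsCrossPair f a b t 𝒜 ℬ) {A : Submodule K V}
    (hA : A ∈ 𝒜) : IsTCover f t ℬ A :=
  ⟨(h.left_subset hA).1, h.le_finrank_inf A hA⟩

theorem not_isTCover_of_finrank_lt {X : Submodule K V} (h : finrank K X < tauCover f t ℬ) :
    ¬ IsTCover f t ℬ X :=
  fun hX => Nat.notMem_of_lt_sInf h ⟨X, hX, rfl⟩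

theorem IsTCover.exists_finrank_eq_tauCover {X : Submodule K V} (hX : IsTCover f t ℬ X) :
    ∃ S, IsTCover f t ℬ S ∧ finrank K S = tauCover f t ℬ :=
  Nat.sInf_mem (s := {x | ∃ X, IsTCover f t ℬ X ∧ finrank K ↥X = x}) ⟨_, X, hX, rfl⟩

variable [FiniteDimensional K V]

theorem IsTCover.le_finrank {X : Submodule K V} (hX : IsTCover f t ℬ X) (hℬ : ℬ.Nonempty) :
    t ≤ finrank K X := by
  obtain ⟨B, hB⟩ := hℬ
  exact (hX.2 B hB).trans (Submodule.finrank_mono inf_le_left)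

theorem IsTCover.le_of_finrank_eq {X B : Submodule K V} (hX : IsTCover f t ℬ X)
    (hXt : finrank K X = t) (hB : B ∈ ℬ) : X ≤ B :=
  inf_eq_left.1 (Submodule.eq_of_le_of_finrank_le inf_le_left (hXt.trans_le (hX.2 B hB)))

end CrossIntersecting

section CoverBounds

local notation "q" => (Nat.card K : ℝ)

variable [Finite V] {f : V →ₗ[K] V →ₗ[K] K} {a b t : ℕ} {𝒜 ℬ : Set (Submodule K V)}
  {X : Submodule K V}

variable [Finite K]

theorem ncard_through_le_of_not_isTCover (h : IsCrossPair f a b t 𝒜 ℬ) (htb : t ≤ b)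
    (hX : ¬ IsTCover f t ℬ X) {c : ℝ} (hc₀ : 0 ≤ c)
    (hc : ∀ v ∉ X, ((through 𝒜 (X ⊔ Submodule.span K {v})).ncard : ℝ) ≤ c) :
    (through 𝒜 X).ncard ≤ qNum q (b + 1 - t) * c := by
  by_cases hiso : TotallyIsotropic f X
  · obtain ⟨B, hB, hXB⟩ : ∃ B ∈ ℬ, finrank K ↥(X ⊓ B) < t := by
      by_contra! hcover
      exact hX ⟨hiso, hcover⟩
    have hBrank := (h.right_subset hB).2
    rw [← hBrank]
    exact ncard_through_le_qNum_mul hc₀ (fun A hA => h.le_finrank_inf A hA.1 B hB) hXB (by lia)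
      fun v _ => hc v
  · rw [through_eq_empty_of_not_totallyIsotropic h.left_subset hiso, Set.ncard_empty,
      Nat.cast_zero]
    exact mul_nonneg (qNum_nonneg (Nat.cast_nonneg _) _) hc₀

variable {ν : ℕ}

theorem ncard_through_le_qNum_pow_mul (hf : IsSymplectic f ν) (ha : a ≤ ν)
    (h : IsCrossPair f a b t 𝒜 ℬ) (htb : t ≤ b) {n : ℕ}
    (hX : finrank K X + n ≤ tauCover f t ℬ) :
    (through 𝒜 X).ncard ≤ qNum q (b + 1 - t) ^ n * isotropicCount q ν (finrank K X + n) a := by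
  induction n generalizing X with
  | zero => simpa using ncard_through_le hf ha h.left_subset X
  | succ n ih =>
    rw [pow_succ', mul_assoc]
    refine ncard_through_le_of_not_isTCover h htb (not_isTCover_of_finrank_lt (by lia))
      (mul_nonneg (pow_nonneg (qNum_nonneg (Nat.cast_nonneg _) _) _)
        (isotropicCount_nonneg (one_lt_natCard K).le _ _ _)) fun v hv => ?_
    have hrank := Submodule.finrank_sup_span_singleton hv
    have := ih (X := X ⊔ Submodule.span K {v}) (by lia)
    rwa [hrank, add_right_comm, add_assoc] at this

theorem IsCrossPair.ncard_left_le (hf : IsSymplectic f ν) (ha : a ≤ ν)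
    (h : IsCrossPair f a b t 𝒜 ℬ) (htb : t ≤ b) (hℬ : ℬ.Nonempty) {i j : ℕ}
    (hi : tauCover f t 𝒜 = t + i) (hj : tauCover f t ℬ = t + j) :
    𝒜.ncard ≤ qBinom q (t + i) t * (qNum q (b + 1 - t) ^ j * isotropicCount q ν (t + j) a) := by
  obtain ⟨B, hB⟩ := hℬ
  obtain ⟨S, hS, hSrank⟩ := (h.symm.isTCover_right hB).exists_finrank_eq_tauCover
  rw [← hi, ← hSrank]
  refine ncard_le_qBinom_mul (fun A hA => inf_comm S A ▸ hS.2 A hA) fun U _ hU => ?_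
  have := ncard_through_le_qNum_pow_mul hf ha h htb (X := U) (n := j) (by lia)
  rwa [hU] at this

end CoverBounds

section ExtremalPairs

local notation "q" => (Nat.card K : ℝ)

variable {f : V →ₗ[K] V →ₗ[K] K} {a b t ν : ℕ} {M S T X : Submodule K V}

/-- The graph `{x + g x • u | x ∈ X}` of a functional `g` on `X`; these are the complements of
`⟨u⟩` in `X ⊔ ⟨u⟩`. -/
def graphAlong (X : Submodule K V) (u : V) (g : X →ₗ[K] K) : Submodule K V :=
  LinearMap.range (X.subtype + g.smulRight u)

theorem graphAlong_le (u : V) (g : X →ₗ[K] K) : graphAlong X u g ≤ X ⊔ Submodule.span K {u} := by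
  rintro _ ⟨x, rfl⟩
  exact Submodule.add_mem_sup x.2 (Submodule.smul_mem _ _ (Submodule.mem_span_singleton_self u))

theorem eq_of_add_smul_eq_add_smul {u : V} (hu : u ∉ X) {x y : X} {c d : K}
    (h : (x : V) + c • u = y + d • u) : x = y ∧ c = d := by
  have hcd : c = d := by
    by_contra hne
    refine hu ((X.smul_mem_iff (sub_ne_zero.2 hne)).1 ?_)
    rw [sub_smul, sub_eq_sub_iff_add_eq_add.2 ((add_comm _ _).trans h)]
    exact X.sub_mem y.2 x.2
  subst hcd
  exact ⟨Subtype.ext (add_right_cancel h), rfl⟩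

theorem notMem_graphAlong {u : V} (hu : u ∉ X) (g : X →ₗ[K] K) : u ∉ graphAlong X u g := by
  rintro ⟨x, hx⟩
  obtain ⟨rfl, hg⟩ := eq_of_add_smul_eq_add_smul (x := x) (y := 0) (c := g x) (d := 1) hu
    (by simpa using hx)
  simp at hg

theorem finrank_graphAlong {u : V} (hu : u ∉ X) (g : X →ₗ[K] K) :
    finrank K (graphAlong X u g) = finrank K X :=
  LinearMap.finrank_range_of_inj fun _ _ h => (eq_of_add_smul_eq_add_smul hu h).1

theorem graphAlong_injective {u : V} (hu : u ∉ X) : Function.Injective (graphAlong X u) := by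
  intro g h hgh
  ext x
  obtain ⟨y, hy⟩ : (x : V) + g x • u ∈ graphAlong X u h := hgh ▸ ⟨x, rfl⟩
  obtain ⟨rfl, heq⟩ := eq_of_add_smul_eq_add_smul hu hy
  exact heq.symm

theorem pow_le_ncard_notMem [Finite V] [Finite K] {u : V} (hu : u ∉ X) :
    Nat.card K ^ finrank K X ≤
      {F | F ≤ X ⊔ Submodule.span K {u} ∧ finrank K F = finrank K X ∧ u ∉ F}.ncard := by
  have hdual : Nat.card (X →ₗ[K] K) = Nat.card K ^ finrank K X := by
    rw [natCard_eq_pow_finrank (K := K), finrank_linearMap, finrank_self, mul_one]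
  rw [← hdual, ← Set.ncard_univ, ← Set.ncard_image_of_injective _ (graphAlong_injective hu)]
  refine Set.ncard_le_ncard ?_
  rintro _ ⟨g, -, rfl⟩
  exact ⟨graphAlong_le u g, finrank_graphAlong hu g, notMem_graphAlong hu g⟩

theorem exists_sup_span_singleton_eq {u : V} (hu : u ∈ M) (hu₀ : u ≠ 0) :
    ∃ X, u ∉ X ∧ X ⊔ Submodule.span K {u} = M := by
  obtain ⟨C, hC⟩ := Submodule.exists_isCompl (Submodule.span K {u})
  refine ⟨C ⊓ M, fun h => ?_, ?_⟩
  · exact hu₀ (by simpa using hC.disjoint.le_bot ⟨Submodule.mem_span_singleton_self u, h.1⟩)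
  · rw [sup_comm, ← sup_inf_assoc_of_le C ((Submodule.span_singleton_le_iff_mem u M).2 hu),
      hC.sup_eq_top, top_inf_eq]

variable [FiniteDimensional K V]

theorem isCrossPair_C1_C2 (hM : finrank K M = b + 1) (hT : finrank K T = t) :
    IsCrossPair f a b t (C1 f M T a t) (C2 f M T b) where
  left_subset _ hA := hA.1
  right_subset _ hB := hB.elim And.left And.left
  le_finrank_inf := by
    rintro A ⟨-, hTA, hAM⟩ B (⟨-, hTB⟩ | ⟨⟨-, hBrank⟩, hBM⟩)
    · exact hT.symm.trans_le (Submodule.finrank_mono (le_inf hTA hTB))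
    · have hdim := Submodule.finrank_sup_add_finrank_inf_eq (A ⊓ M) B
      have hsup := Submodule.finrank_mono (sup_le (inf_le_right : A ⊓ M ≤ M) hBM)
      have hinf : finrank K ↥((A ⊓ M) ⊓ B) ≤ finrank K ↥(A ⊓ B) :=
        Submodule.finrank_mono (inf_le_inf_right _ inf_le_left)
      lia

end ExtremalPairs

section ExtremalCounts

local notation "q" => (Nat.card K : ℝ)

variable [Finite V] [Finite K] {f : V →ₗ[K] V →ₗ[K] K} {a b t ν : ℕ} {M S T : Submodule K V}

theorem isotropicCount_add_pow_le_ncard_C2 (hf : IsSymplectic f ν) (hb : b ≤ ν)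
    (hM : M ∈ polar f (b + 1)) (hTM : T ≤ M) (hT : T ≠ ⊥) :
    isotropicCount q ν (finrank K T) b + q ^ b ≤ (C2 f M T b).ncard := by
  obtain ⟨u, huT, hu₀⟩ := T.exists_mem_ne_zero_of_ne_bot hT
  obtain ⟨X, huX, rfl⟩ := exists_sup_span_singleton_eq (hTM huT) hu₀
  have hX : finrank K X = b := by
    have := hM.2
    rw [Submodule.finrank_sup_span_singleton huX] at this
    lia
  have hℋ := pow_le_ncard_notMem huX
  set ℋ := {F | F ≤ X ⊔ Submodule.span K {u} ∧ finrank K F = finrank K X ∧ u ∉ F}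
  have hdisj : Disjoint (through (polar f b) T) ℋ :=
    Set.disjoint_left.2 fun F hF hF' => hF'.2.2 (hF.2 huT)
  have hsub : through (polar f b) T ∪ ℋ ⊆ C2 f (X ⊔ Submodule.span K {u}) T b :=
    Set.union_subset_union_right _ fun F hF =>
      ⟨⟨hM.1.mono hF.1, hF.2.1.trans hX⟩, hF.1⟩
  rw [hX] at hℋ
  rw [← ncard_through_polar hf hb (hM.1.mono hTM)]
  have hle := Set.ncard_le_ncard hsub
  rw [Set.ncard_union_eq hdisj] at hle
  exact_mod_cast (Nat.add_le_add_left hℋ _).trans hle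

theorem le_of_forall_mem_through_polar (hf : IsSymplectic f ν) (hb : b ≤ ν)
    (hT : TotallyIsotropic f T) (hTb : finrank K T + 1 ≤ b) (hbν : 2 + finrank K T + b ≤ 2 * ν)
    (hS : ∀ B ∈ through (polar f b) T, S ≤ B) : S ≤ T := by
  intro v hvS
  by_contra hvT
  have hthrough : through (polar f b) T ⊆ through (polar f b) (T ⊔ Submodule.span K {v}) :=
    fun B hB => ⟨hB.1, sup_span_singleton_le_iff.2 ⟨hB.2, hS B hB hvS⟩⟩
  have hle : isotropicCount q ν (finrank K T) b ≤ isotropicCount q ν (finrank K T + 1) b := by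
    rw [← ncard_through_polar hf hb hT]
    exact (Nat.cast_le.2 (Set.ncard_le_ncard hthrough)).trans
      (ncard_through_sup_span_le hf hb subset_rfl hvT)
  have hpos := isotropicCount_pos (one_lt_natCard K) hTb hb
  nlinarith [add_one_mul_isotropicCount_succ_lt (two_le_natCard K) hTb hb hbν, two_le_natCard K]

theorem le_of_forall_le_finrank_inf (hf : IsSymplectic f ν) (hb : b ≤ ν)
    (hT : T ∈ polar f t) (hTb : t + 1 ≤ b) (hbν : 2 + t + b ≤ 2 * ν)
    (hS : finrank K S = t + 1) (hcover : ∀ B ∈ through (polar f b) T, t ≤ finrank K ↥(B ⊓ S)) :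
    T ≤ S := by
  by_contra hTS
  have hlt : finrank K ↥(T ⊓ S) < t :=
    hT.2 ▸ Submodule.finrank_lt_finrank_of_lt (inf_lt_left.2 hTS)
  have hle := ncard_through_le_qNum_mul (isotropicCount_nonneg (one_lt_natCard K).le _ _ _) hcover
    hlt (by lia) fun v _ hv => ncard_through_sup_span_le hf hb subset_rfl hv
  rw [ncard_through_polar hf hb hT.1, hT.2, hS, show t + 1 + 1 - t = 2 by lia, qNum_two] at hle
  exact hle.not_gt (add_one_mul_isotropicCount_succ_lt (two_le_natCard K) hTb hb hbν)

theorem isNontrivialCrossPair_C1_C2 (hf : IsSymplectic f ν) (ht : 0 < t) (hb : b ≤ ν)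
    (htb : t + 1 ≤ b) (hbν : 2 + t + b ≤ 2 * ν) (hM : M ∈ polar f (b + 1)) (hTM : T ≤ M)
    (hT : finrank K T = t) :
    IsNontrivialCrossPair f a b t (C1 f M T a t) (C2 f M T b) where
  toIsCrossPair := isCrossPair_C1_C2 hM.2 hT
  nontrivial := by
    rintro ⟨T', hT', -, hC2⟩
    have hT'T : T' ≤ T := le_of_forall_mem_through_polar hf hb (hM.1.mono hTM) (by lia) (by lia)
      fun B hB => hC2 B (Or.inl hB)
    obtain rfl : T' = T := Submodule.eq_of_le_of_finrank_eq hT'T (hT'.2.trans hT.symm)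
    have hC2' : C2 f M T' b = through (polar f b) T' :=
      Set.Subset.antisymm (fun B hB => ⟨hB.elim And.left And.left, hC2 B hB⟩)
        Set.subset_union_left
    have hle := isotropicCount_add_pow_le_ncard_C2 hf hb hM hTM (by
      rintro rfl
      rw [finrank_bot] at hT
      lia)
    rw [hC2', ncard_through_polar hf hb hT'.1] at hle
    have := pow_pos (zero_lt_one.trans (one_lt_natCard K)) b
    linarith

theorem IsMaxPair.ncard_C1_mul_ncard_C2_le {𝒜 ℬ : Set (Submodule K V)} (hf : IsSymplectic f ν)
    (h : IsMaxPair f a b t 𝒜 ℬ) (ht : 0 < t) (hb : b ≤ ν) (htb : t + 1 ≤ b)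
    (hbν : 2 + t + b ≤ 2 * ν) (hM : M ∈ polar f (b + 1)) (hTM : T ≤ M) (hT : finrank K T = t) :
    ((C1 f M T a t).ncard : ℝ) * (C2 f M T b).ncard ≤ 𝒜.ncard * ℬ.ncard := by
  exact_mod_cast h.ncard_mul_le _ _ (isNontrivialCrossPair_C1_C2 hf ht hb htb hbν hM hTM hT)

end ExtremalCounts

section CoverSpan

variable {f : V →ₗ[K] V →ₗ[K] K} {a b t ν : ℕ} {𝒜 ℬ : Set (Submodule K V)}
  {A B S T X : Submodule K V}

/-- The span of the `(t + 1)`-dimensional `t`-covers of `ℬ` containing `T`. In the extremal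
configuration it is the space `M` defining `𝒞₁` and `𝒞₂`. -/
def coverSpan (f : V →ₗ[K] V →ₗ[K] K) (t : ℕ) (ℬ : Set (Submodule K V)) (T : Submodule K V) :
    Submodule K V :=
  sSup {S | finrank K S = t + 1 ∧ T ≤ S ∧ IsTCover f t ℬ S}

theorem le_coverSpan (hS : finrank K S = t + 1) (hTS : T ≤ S) (hcover : IsTCover f t ℬ S) :
    S ≤ coverSpan f t ℬ T :=
  le_sSup ⟨hS, hTS, hcover⟩

theorem apply_eq_zero_of_mem_coverSpan {x y : V} (hx : x ∈ T) (hy : y ∈ coverSpan f t ℬ T) :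
    f x y = 0 := by
  have hker : coverSpan f t ℬ T ≤ LinearMap.ker (f x) :=
    sSup_le fun S hS z hz => hS.2.2.1 x (hS.2.1 hx) z hz
  exact hker hy

variable [FiniteDimensional K V]

theorem lt_sup_inf_of_not_le (hTB : ¬ T ≤ B) (hX : finrank K T ≤ finrank K ↥(X ⊓ B)) :
    T < T ⊔ X ⊓ B := by
  refine left_lt_sup.2 fun hle => hTB ?_
  rw [← Submodule.eq_of_le_of_finrank_le hle hX]
  exact inf_le_right

theorem sup_inf_eq_of_finrank_eq (hTB : ¬ T ≤ B) (hTS : T ≤ S)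
    (hS : finrank K S = finrank K T + 1) (hSB : finrank K T ≤ finrank K ↥(S ⊓ B)) :
    T ⊔ S ⊓ B = S :=
  Submodule.eq_of_le_of_finrank_le (sup_le hTS inf_le_left)
    (hS ▸ Submodule.finrank_lt_finrank_of_lt (lt_sup_inf_of_not_le hTB hSB))

theorem finrank_sup_eq_succ (hTB : ¬ T ≤ B) (hTS : T ≤ S)
    (hS : finrank K S = finrank K T + 1) (hSB : finrank K T ≤ finrank K ↥(S ⊓ B)) :
    finrank K ↥(T ⊔ B) = finrank K B + 1 := by
  have hdim := Submodule.finrank_sup_add_finrank_inf_eq T B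
  have hlt := Submodule.finrank_lt_finrank_of_lt (inf_lt_left.2 hTB)
  have hdimS := Submodule.finrank_sup_add_finrank_inf_eq T (S ⊓ B)
  rw [sup_inf_eq_of_finrank_eq hTB hTS hS hSB] at hdimS
  have hle : finrank K ↥(T ⊓ (S ⊓ B)) ≤ finrank K ↥(T ⊓ B) :=
    Submodule.finrank_mono (inf_le_inf_left T inf_le_right)
  lia

theorem succ_le_finrank_inf_sup (hTB : ¬ T ≤ B) (hTA : T ≤ A)
    (hAB : finrank K T ≤ finrank K ↥(A ⊓ B)) : finrank K T + 1 ≤ finrank K ↥(A ⊓ (T ⊔ B)) :=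
  (Submodule.finrank_lt_finrank_of_lt (lt_sup_inf_of_not_le hTB hAB)).trans_le
    (Submodule.finrank_mono
      (le_inf (sup_le hTA inf_le_left) (sup_le_sup_left inf_le_right T)))

theorem coverSpan_le_sup (hT : finrank K T = t) (hB : B ∈ ℬ) (hTB : ¬ T ≤ B) :
    coverSpan f t ℬ T ≤ T ⊔ B := by
  refine sSup_le fun S ⟨hS, hTS, hcover⟩ => ?_
  rw [← sup_inf_eq_of_finrank_eq hTB hTS (hT ▸ hS) (hT ▸ hcover.2 B hB)]
  exact sup_le_sup_left inf_le_right T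

theorem mem_coverSpan_of_isTCover (hT : finrank K T = t) {v : V} (hv : v ∉ T)
    (hcover : IsTCover f t ℬ (T ⊔ Submodule.span K {v})) : v ∈ coverSpan f t ℬ T :=
  (sup_span_singleton_le_iff.1
    (le_coverSpan (by rw [Submodule.finrank_sup_span_singleton hv, hT]) le_sup_left hcover)).2

end CoverSpan

section Star

local notation "q" => (Nat.card K : ℝ)

/-- The configuration of the main case: every member of `𝒜` contains the totally isotropic
`t`-space `T`, while `ℬ` has a member not containing `T` and a `t`-cover of dimension `t + 1`
containing `T`. -/
structure IsStarPair (f : V →ₗ[K] V →ₗ[K] K) (a b t : ℕ) (𝒜 ℬ : Set (Submodule K V))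
    (T : Submodule K V) : Prop extends IsCrossPair f a b t 𝒜 ℬ where
  center_mem : T ∈ polar f t
  center_le : ∀ A ∈ 𝒜, T ≤ A
  exists_not_center_le : ∃ B ∈ ℬ, ¬ T ≤ B
  exists_cover : ∃ S : Submodule K V, finrank K S = t + 1 ∧ T ≤ S ∧ IsTCover f t ℬ S

namespace IsStarPair

variable {f : V →ₗ[K] V →ₗ[K] K} {a b t ν k : ℕ} {𝒜 ℬ : Set (Submodule K V)}
  {B T : Submodule K V}

theorem center_le_coverSpan (h : IsStarPair f a b t 𝒜 ℬ T) : T ≤ coverSpan f t ℬ T :=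
  let ⟨_, hS, hTS, hcover⟩ := h.exists_cover
  hTS.trans (le_coverSpan hS hTS hcover)

section

variable [FiniteDimensional K V]

theorem finrank_sup (h : IsStarPair f a b t 𝒜 ℬ T) (hB : B ∈ ℬ) (hTB : ¬ T ≤ B) :
    finrank K ↥(T ⊔ B) = b + 1 := by
  obtain ⟨S, hS, hTS, hcover⟩ := h.exists_cover
  obtain ⟨-, hT⟩ := h.center_mem
  rw [finrank_sup_eq_succ hTB hTS (hT ▸ hS) (hT ▸ hcover.2 B hB), (h.right_subset hB).2]

theorem exists_finrank_coverSpan (h : IsStarPair f a b t 𝒜 ℬ T) :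
    ∃ k, 1 ≤ k ∧ k ≤ b + 1 - t ∧ finrank K (coverSpan f t ℬ T) = t + k := by
  obtain ⟨S, hS, hTS, hcover⟩ := h.exists_cover
  obtain ⟨B, hB, hTB⟩ := h.exists_not_center_le
  have hlower := Submodule.finrank_mono (le_coverSpan hS hTS hcover)
  have hupper := Submodule.finrank_mono (coverSpan_le_sup (f := f) h.center_mem.2 hB hTB)
  rw [h.finrank_sup hB hTB] at hupper
  exact ⟨finrank K (coverSpan f t ℬ T) - t, by lia, by lia, by lia⟩

theorem isTCover_coverSpan (h : IsStarPair f a b t 𝒜 ℬ T)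
    (hrank : finrank K (coverSpan f t ℬ T) = t + 1) : IsTCover f t ℬ (coverSpan f t ℬ T) := by
  obtain ⟨S, hS, hTS, hcover⟩ := h.exists_cover
  rwa [← Submodule.eq_of_le_of_finrank_le (le_coverSpan hS hTS hcover) (by lia)]

theorem coverSpan_eq_sup (h : IsStarPair f a b t 𝒜 ℬ T)
    (hrank : finrank K (coverSpan f t ℬ T) = b + 1) (hB : B ∈ ℬ) (hTB : ¬ T ≤ B) :
    coverSpan f t ℬ T = T ⊔ B :=
  Submodule.eq_of_le_of_finrank_le (coverSpan_le_sup h.center_mem.2 hB hTB)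
    (by rw [h.finrank_sup hB hTB, hrank])

theorem coverSpan_mem_polar (h : IsStarPair f a b t 𝒜 ℬ T) (hf : f.IsAlt)
    (hrank : finrank K (coverSpan f t ℬ T) = b + 1) : coverSpan f t ℬ T ∈ polar f (b + 1) := by
  obtain ⟨B, hB, hTB⟩ := h.exists_not_center_le
  have heq := h.coverSpan_eq_sup hrank hB hTB
  refine ⟨?_, hrank⟩
  rw [heq]
  exact h.center_mem.1.sup hf (h.right_subset hB).1 fun x hx y hy =>
    apply_eq_zero_of_mem_coverSpan hx (heq ▸ Submodule.mem_sup_right hy)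

theorem left_subset_C1 (h : IsStarPair f a b t 𝒜 ℬ T)
    (hrank : finrank K (coverSpan f t ℬ T) = b + 1) : 𝒜 ⊆ C1 f (coverSpan f t ℬ T) T a t := by
  obtain ⟨B, hB, hTB⟩ := h.exists_not_center_le
  obtain ⟨-, hT⟩ := h.center_mem
  intro A hA
  refine ⟨h.left_subset hA, h.center_le A hA, ?_⟩
  have := succ_le_finrank_inf_sup hTB (h.center_le A hA) (hT ▸ h.le_finrank_inf A hA B hB)
  rwa [hT, ← h.coverSpan_eq_sup hrank hB hTB] at this

theorem right_subset_C2 (h : IsStarPair f a b t 𝒜 ℬ T)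
    (hrank : finrank K (coverSpan f t ℬ T) = b + 1) : ℬ ⊆ C2 f (coverSpan f t ℬ T) T b := by
  intro B hB
  by_cases hTB : T ≤ B
  · exact Or.inl ⟨h.right_subset hB, hTB⟩
  · exact Or.inr ⟨h.right_subset hB, h.coverSpan_eq_sup hrank hB hTB ▸ le_sup_right⟩

end

variable [Finite V] [Finite K]

theorem ncard_through_sup_span_le_of_notMem (hf : IsSymplectic f ν) (ha : a ≤ ν)
    (h : IsCrossPair f a b t 𝒜 ℬ) (htb : t ≤ b) (hT : finrank K T = t) {v : V} (hvT : v ∉ T)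
    (hv : v ∉ coverSpan f t ℬ T) :
    ((through 𝒜 (T ⊔ Submodule.span K {v})).ncard : ℝ) ≤
      qNum q (b + 1 - t) * isotropicCount q ν (t + 2) a := by
  refine ncard_through_le_of_not_isTCover h htb
    (fun hcover => hv (mem_coverSpan_of_isTCover hT hvT hcover))
    (isotropicCount_nonneg (one_lt_natCard K).le _ _ _) fun w hw => ?_
  have := ncard_through_sup_span_le hf ha h.left_subset hw
  rwa [Submodule.finrank_sup_span_singleton hvT, hT] at this

theorem ncard_left_mul_le (hf : IsSymplectic f ν) (ha : a ≤ ν) (htb : t ≤ b)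
    (h : IsStarPair f a b t 𝒜 ℬ T) :
    𝒜.ncard * (q ^ (t + 1) - q ^ t) ≤
      (q ^ (b + 1) - q ^ t) * (qNum q (b + 1 - t) * isotropicCount q ν (t + 2) a) +
      (q ^ finrank K (coverSpan f t ℬ T) - q ^ t) * (isotropicCount q ν (t + 1) a -
        qNum q (b + 1 - t) * isotropicCount q ν (t + 2) a) := by
  classical
  obtain ⟨B, hB, hTB⟩ := h.exists_not_center_le
  obtain ⟨-, hT⟩ := h.center_mem
  have hrank := h.finrank_sup hB hTB
  set M := coverSpan f t ℬ T
  set c₁ := isotropicCount q ν (t + 1) a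
  set c₂ := qNum q (b + 1 - t) * isotropicCount q ν (t + 2) a
  have hmeet : ∀ A ∈ through 𝒜 T, t + 1 ≤ finrank K ↥(A ⊓ (T ⊔ B)) := fun A hA => by
    have := succ_le_finrank_inf_sup hTB hA.2 (hT ▸ h.le_finrank_inf A hA.1 B hB)
    rwa [hT] at this
  have hpencil : ∀ v ∈ T ⊔ B, v ∉ T → ((through 𝒜 (T ⊔ Submodule.span K {v})).ncard : ℝ) ≤
      c₂ + if v ∈ M then c₁ - c₂ else 0 := fun v _ hvT => by
    split_ifs with hvM
    · have := ncard_through_sup_span_le hf ha h.left_subset hvT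
      rwa [hT, ← add_sub_cancel c₂ (isotropicCount _ _ _ _)] at this
    · rw [add_zero]
      exact ncard_through_sup_span_le_of_notMem hf ha h.toIsCrossPair htb hT hvT hvM
  have hsum := ncard_through_mul_le_sum hmeet hpencil
  have hfilter : ((T ⊔ B : Submodule K V) \ T : Set V).toFinite.toFinset.filter (· ∈ M) =
      ((M : Set V) \ T).toFinite.toFinset := by
    ext v
    simp only [mem_filter, Set.Finite.mem_toFinset, Set.mem_sdiff, SetLike.mem_coe]
    exact ⟨fun hv => ⟨hv.2, hv.1.2⟩,
      fun hv => ⟨⟨coverSpan_le_sup hT hB hTB hv.1, hv.2⟩, hv.1⟩⟩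
  rwa [through_eq_self_iff.2 h.center_le, sum_add_distrib, ← sum_filter, hfilter, sum_const,
    sum_const, nsmul_eq_mul, nsmul_eq_mul, ← Set.ncard_eq_toFinset_card _,
    ← Set.ncard_eq_toFinset_card _, ncard_coe_sdiff, ncard_coe_sdiff, inf_eq_right.2 le_sup_left,
    inf_eq_right.2 h.center_le_coverSpan, hrank, hT] at hsum

theorem ncard_left_le (hf : IsSymplectic f ν) (ha : a ≤ ν) (htb : t ≤ b)
    (h : IsStarPair f a b t 𝒜 ℬ T) (hk : finrank K (coverSpan f t ℬ T) = t + k) :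
    𝒜.ncard ≤ qNum q k * isotropicCount q ν (t + 1) a +
      (qNum q (b + 1 - t) - qNum q k) *
        (qNum q (b + 1 - t) * isotropicCount q ν (t + 2) a) := by
  have hle := ncard_left_mul_le hf ha htb h
  have hpow (n : ℕ) : q ^ (t + n) - q ^ t = q ^ t * (qNum q n * (q - 1)) := by
    rw [qNum_mul_sub_one]
    ring
  rw [hk, show b + 1 = t + (b + 1 - t) by lia, hpow, hpow, hpow, qNum_one,
    show t + (b + 1 - t) - t = b + 1 - t by lia] at hle
  have hq := one_lt_natCard K
  refine le_of_mul_le_mul_right (hle.trans_eq' ?_ |>.trans_eq ?_)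
    (mul_pos (pow_pos (by linarith) t) (sub_pos.2 hq) : 0 < q ^ t * (q - 1)) <;> ring

theorem ncard_right_le_of_finrank_eq_succ (hf : IsSymplectic f ν) (hb : b ≤ ν)
    (h : IsStarPair f a b t 𝒜 ℬ T) (hrank : finrank K (coverSpan f t ℬ T) = t + 1) :
    ℬ.ncard ≤ qNum q (t + 1) * isotropicCount q ν t b := by
  rw [← qBinom_succ_self (one_lt_natCard K), ← hrank]
  refine ncard_le_qBinom_mul
    (fun B hB => inf_comm B _ ▸ (h.isTCover_coverSpan hrank).2 B hB) fun U _ hU => ?_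
  exact hU ▸ ncard_through_le hf hb h.right_subset U

theorem ncard_right_le_of_two_le (hf : IsSymplectic f ν) (hb : b ≤ ν)
    (h : IsStarPair f a b t 𝒜 ℬ T) (hrank : t + 2 ≤ finrank K (coverSpan f t ℬ T)) :
    ℬ.ncard ≤ isotropicCount q ν t b + qNum q (t + 2) * isotropicCount q ν (t + 1) b := by
  obtain ⟨S, hSM, hS⟩ := exists_le_finrank_eq hrank
  have hthrough := ncard_through_le hf hb h.right_subset T
  rw [h.center_mem.2] at hthrough
  have hrest : (((ℬ \ through ℬ T).ncard : ℕ) : ℝ) ≤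
      qNum q (t + 2) * isotropicCount q ν (t + 1) b := by
    rw [← qBinom_succ_self (one_lt_natCard K) (t + 1), ← hS]
    refine ncard_le_qBinom_mul (fun B ⟨hB, hTB⟩ => ?_) fun U _ hU =>
      hU ▸ ncard_through_le hf hb (Set.sdiff_subset.trans h.right_subset) U
    have hTB : ¬ T ≤ B := fun hle => hTB ⟨hB, hle⟩
    have hsup := Submodule.finrank_mono (sup_le (le_sup_right : B ≤ T ⊔ B)
      (hSM.trans (coverSpan_le_sup h.center_mem.2 hB hTB)))
    have hdim := Submodule.finrank_sup_add_finrank_inf_eq B S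
    rw [h.finrank_sup hB hTB] at hsup
    rw [(h.right_subset hB).2] at hdim
    lia
  rw [← Set.ncard_sdiff_add_ncard_of_subset (through_subset ℬ T)]
  push_cast
  linarith

end IsStarPair

end Star

section Estimates

/-- The bound for a family of isotropic `a`-spaces in terms of the minimal dimensions `t + i` of
the `t`-covers of the two families, collecting in one factor everything that depends on `i`. -/
def coverBound (q : ℝ) (ν t a b i : ℕ) : ℝ :=
  qBinom q (t + i) t * (qNum q (b + 1 - t) ^ i * isotropicCount q ν (t + i) a)

/-- The leading term of `|𝒞₁| * |𝒞₂|` for families of isotropic `a`- and `b`-spaces. -/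
def mainTerm (q : ℝ) (ν t a b : ℕ) : ℝ :=
  qNum q (b + 1 - t) * isotropicCount q ν (t + 1) a * isotropicCount q ν t b

variable {q : ℝ} {ν t a b i j e : ℕ}

theorem mainTerm_pos (hq : 1 < q) (hta : t + 1 ≤ a) (htb : t ≤ b) (ha : a ≤ ν) (hb : b ≤ ν) :
    0 < mainTerm q ν t a b :=
  mul_pos (mul_pos (zero_lt_one.trans_le (one_le_qNum (by linarith) (by lia)))
    (isotropicCount_pos hq hta ha)) (isotropicCount_pos hq htb hb)

theorem coverBound_zero (hq : 1 < q) (ν t a b : ℕ) :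
    coverBound q ν t a b 0 = isotropicCount q ν t a := by
  simp [coverBound, qBinom_self hq]

theorem coverBound_one (hq : 1 < q) (ν t a b : ℕ) :
    coverBound q ν t a b 1 =
      qNum q (t + 1) * (qNum q (b + 1 - t) * isotropicCount q ν (t + 1) a) := by
  rw [coverBound, qBinom_succ_self hq, pow_one]

theorem coverBound_nonneg (hq : 1 < q) (ν t a b i : ℕ) : 0 ≤ coverBound q ν t a b i :=
  mul_nonneg (qBinom_pos hq (Nat.le_add_right t i)).le
    (mul_nonneg (pow_nonneg (qNum_nonneg (by linarith) _) i) (isotropicCount_nonneg hq.le ..))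

theorem pow_mul_coverBound_succ_le (hq : 2 ≤ q) (ha : a ≤ ν) (htb : t ≤ b)
    (he : e + i + 2 + t + a + b ≤ 2 * ν) :
    q ^ e * coverBound q ν t a b (i + 1) ≤ coverBound q ν t a b i := by
  have hq₁ : 1 < q := by linarith
  have hN := isotropicCount_nonneg hq₁.le ν (t + (i + 1)) a
  have hG := qNum_nonneg (by linarith : 0 ≤ q) (b + 1 - t)
  have hbinom := (qBinom_pos hq₁ (Nat.le_add_right t i)).le
  calc q ^ e * coverBound q ν t a b (i + 1)
      ≤ q ^ e * (q ^ (t + 1) * qBinom q (t + i) t *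
          (qNum q (b + 1 - t) ^ (i + 1) * isotropicCount q ν (t + (i + 1)) a)) := by
        unfold coverBound
        gcongr
        exact qBinom_succ_le hq t i
    _ = qBinom q (t + i) t * (qNum q (b + 1 - t) ^ i *
          (q ^ (e + (t + 1)) * (qNum q (b + 1 - t) * isotropicCount q ν (t + i + 1) a))) := by
        rw [← add_assoc t i 1]
        ring
    _ ≤ coverBound q ν t a b i := by
        unfold coverBound
        gcongr
        exact pow_mul_qNum_mul_isotropicCount_succ_le hq ha (by lia)

theorem coverBound_anti (hq : 2 ≤ q) (ha : a ≤ ν) (htb : t ≤ b) (hij : i ≤ j)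
    (hj : j + 1 + t + a + b ≤ 2 * ν) : coverBound q ν t a b j ≤ coverBound q ν t a b i := by
  induction j, hij using Nat.le_induction with
  | base => rfl
  | succ j _ ih =>
    have hstep := pow_mul_coverBound_succ_le hq (e := 0) (i := j) ha htb (by lia)
    rw [pow_zero, one_mul] at hstep
    exact hstep.trans (ih (by lia))

theorem coverBound_le_of_one_le (hq : 2 ≤ q) (ha : a ≤ ν) (htb : t ≤ b) (hi : 1 ≤ i)
    (hdim : i + 1 + t + a + b ≤ 2 * ν) :
    coverBound q ν t a b i ≤
      q ^ (t + 1) * (qNum q (b + 1 - t) * isotropicCount q ν (t + 1) a) := by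
  refine (coverBound_anti hq ha htb hi hdim).trans ?_
  rw [coverBound_one (by linarith)]
  gcongr
  · exact mul_nonneg (qNum_nonneg (by linarith) _) (isotropicCount_nonneg (by linarith) ..)
  · exact qNum_le_pow hq (t + 1)

theorem two_mul_coverBound_mul_isotropicCount_le (hq : 2 ≤ q) (ha : a ≤ ν) (htb : t ≤ b)
    (hj : 2 ≤ j) (hdim : j + 1 + t + a + b ≤ 2 * ν) (hdim' : 2 * t + a + b + 5 ≤ 2 * ν) :
    2 * (coverBound q ν t a b j * isotropicCount q ν t b) ≤ mainTerm q ν t a b := by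
  have hpow : 0 < q ^ (t + 1) := by positivity
  have hstep := (pow_mul_coverBound_succ_le hq (e := t + 2) (i := 1) ha htb (by lia)).trans
    (coverBound_le_of_one_le hq ha htb le_rfl (by lia))
  rw [pow_succ, mul_assoc] at hstep
  have hhalf : 2 * coverBound q ν t a b j ≤
      qNum q (b + 1 - t) * isotropicCount q ν (t + 1) a :=
    calc 2 * coverBound q ν t a b j ≤ q * coverBound q ν t a b 2 := by
          gcongr
          · exact coverBound_nonneg (by linarith) ..
          · exact coverBound_anti hq ha htb hj hdim
      _ ≤ _ := le_of_mul_le_mul_left hstep hpow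
  rw [← mul_assoc]
  exact mul_le_mul_of_nonneg_right hhalf (isotropicCount_nonneg (by linarith) ..)

theorem two_mul_coverBound_mul_coverBound_le (hq : 2 ≤ q) (ha : a ≤ ν) (hb : b ≤ ν) (hta : t ≤ a)
    (htb : t ≤ b) (hi : 1 ≤ i) (hj : 1 ≤ j) (hidim : i + 1 + t + a + b ≤ 2 * ν)
    (hjdim : j + 1 + t + a + b ≤ 2 * ν) (hdim : 2 * t + a + b + 4 ≤ 2 * ν) :
    2 * (coverBound q ν t b a i * coverBound q ν t a b j) ≤ mainTerm q ν t a b := by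
  have hc := coverBound_nonneg (by linarith : 1 < q) ν t b a 1
  have hright : q ^ (t + 2) * coverBound q ν t b a 1 ≤ isotropicCount q ν t b :=
    coverBound_zero (by linarith : 1 < q) ν t b a ▸
      pow_mul_coverBound_succ_le hq (i := 0) hb hta (by lia)
  calc 2 * (coverBound q ν t b a i * coverBound q ν t a b j)
      ≤ q * (coverBound q ν t b a 1 *
          (q ^ (t + 1) * (qNum q (b + 1 - t) * isotropicCount q ν (t + 1) a))) := by
        gcongr
        · exact mul_nonneg (coverBound_nonneg (by linarith) ..) (coverBound_nonneg (by linarith) ..)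
        · exact coverBound_nonneg (by linarith) ..
        · exact coverBound_anti hq hb hta hi (by lia)
        · exact coverBound_le_of_one_le hq ha htb hj hjdim
    _ = qNum q (b + 1 - t) * isotropicCount q ν (t + 1) a *
          (q ^ (t + 2) * coverBound q ν t b a 1) := by ring
    _ ≤ mainTerm q ν t a b := mul_le_mul_of_nonneg_left hright
        (mul_nonneg (qNum_nonneg (by linarith) _) (isotropicCount_nonneg (by linarith) ..))

theorem four_mul_mul_sub_one_mul_sub_one_le {x y : ℝ} (hq : 2 ≤ q) (hx : q ≤ x) (hy : q * x ≤ y) :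
    4 * x * (q * y - 1) * (x - 1) ≤ (4 * x - 1) * (q * x - 1) * (y - 1) := by
  have hdiff : y ≤ 2 * (y - x) := by nlinarith
  have hprod : q * y ≤ 2 * (q - 1) * (2 * (y - x)) :=
    mul_le_mul (by linarith) hdiff (by nlinarith) (by linarith)
  have hscaled := mul_le_mul_of_nonneg_left hprod (by linarith : 0 ≤ x)
  nlinarith

theorem mainTerm_mul_sub_one_mul_sub_one (hq : 1 < q) (a : ℕ) (htb : t < b) :
    mainTerm q ν t a b * ((q - 1) * (q ^ (a - t) - 1) * (q ^ (b - t) - 1)) =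
      (q * q ^ (b - t) - 1) * (q ^ (a - t) - 1) * ((q ^ (2 * (ν - t)) - 1) *
        isotropicCount q ν (t + 1) a * isotropicCount q ν (t + 1) b) := by
  have hG := qNum_mul_sub_one q (b + 1 - t)
  have hN := isotropicCount_mul_pow_sub_one hq ν htb
  rw [Nat.sub_add_comm htb.le, pow_succ'] at hG
  rw [mainTerm, Nat.sub_add_comm htb.le]
  linear_combination (q ^ (a - t) - 1) * (isotropicCount q ν (t + 1) a *
    isotropicCount q ν t b * (q ^ (b - t) - 1) * hG +
    (q * q ^ (b - t) - 1) * isotropicCount q ν (t + 1) a * hN)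

theorem mul_mainTerm_le_mul_mainTerm_swap (hq : 2 ≤ q) (hta : t < a) (hab : a < b) :
    4 * q ^ (a - t) * mainTerm q ν t a b ≤ (4 * q ^ (a - t) - 1) * mainTerm q ν t b a := by
  have hq₁ : 1 < q := by linarith
  have hx : q ≤ q ^ (a - t) := le_self_pow₀ hq₁.le (by lia)
  have hy : q * q ^ (a - t) ≤ q ^ (b - t) := by
    rw [← pow_succ']
    exact pow_le_pow_right₀ hq₁.le (by lia)
  have hx₁ : 0 < q ^ (a - t) - 1 := by linarith
  have hy₁ : 0 < q ^ (b - t) - 1 := by nlinarith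
  have hcommon : 0 ≤ (q ^ (2 * (ν - t)) - 1) * isotropicCount q ν (t + 1) a *
      isotropicCount q ν (t + 1) b :=
    mul_nonneg (mul_nonneg (sub_nonneg.2 (one_le_pow₀ hq₁.le)) (isotropicCount_nonneg hq₁.le ..))
      (isotropicCount_nonneg hq₁.le ..)
  have hkey := mul_le_mul_of_nonneg_right (four_mul_mul_sub_one_mul_sub_one_le hq hx hy) hcommon
  have hleft := mainTerm_mul_sub_one_mul_sub_one (ν := ν) hq₁ a (hta.trans hab)
  have hright := mainTerm_mul_sub_one_mul_sub_one (ν := ν) hq₁ b hta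
  refine le_of_mul_le_mul_right ?_
    (mul_pos (mul_pos (sub_pos.2 hq₁) hx₁) hy₁ :
      0 < (q - 1) * (q ^ (a - t) - 1) * (q ^ (b - t) - 1))
  linear_combination hkey + 4 * q ^ (a - t) * hleft - (4 * q ^ (a - t) - 1) * hright

theorem mainTerm_le_mainTerm_swap (hq : 2 ≤ q) (hta : t < a) (hab : a ≤ b) (hb : b ≤ ν) :
    mainTerm q ν t a b ≤ mainTerm q ν t b a := by
  rcases hab.eq_or_lt with rfl | hlt
  · rfl
  · have hpos := mainTerm_pos (by linarith : 1 < q) (by lia : t + 1 ≤ b) hta.le hb (hab.trans hb)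
    refine le_of_mul_le_mul_left ((mul_mainTerm_le_mul_mainTerm_swap hq hta hlt).trans ?_)
      (by positivity : 0 < 4 * q ^ (a - t))
    exact mul_le_mul_of_nonneg_right (by linarith) hpos.le

end Estimates

section Comparison

variable {f : V →ₗ[K] V →ₗ[K] K} {a b t ν : ℕ} {𝒜 ℬ : Set (Submodule K V)}
  {A T : Submodule K V} [Finite V] [Finite K]

local notation "q" => (Nat.card K : ℝ)

theorem IsCrossPair.ncard_mul_ncard_le (hf : IsSymplectic f ν) (ha : a ≤ ν) (hb : b ≤ ν)
    (hta : t ≤ a) (htb : t ≤ b) (h : IsCrossPair f a b t 𝒜 ℬ) (h𝒜 : 𝒜.Nonempty)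
    (hℬ : ℬ.Nonempty) {i j : ℕ} (hi : tauCover f t 𝒜 = t + i) (hj : tauCover f t ℬ = t + j) :
    (𝒜.ncard * ℬ.ncard : ℝ) ≤ coverBound q ν t b a i * coverBound q ν t a b j := by
  have hleft := h.ncard_left_le hf ha htb hℬ hi hj
  have hright := h.symm.ncard_left_le hf hb hta h𝒜 hj hi
  refine (mul_le_mul hleft hright (Nat.cast_nonneg _) ((Nat.cast_nonneg _).trans hleft)).trans_eq ?_
  unfold coverBound
  ring

namespace IsStarPair

theorem four_mul_ncard_mul_ncard_le_of_finrank_eq_succ (hf : IsSymplectic f ν)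
    (h : IsStarPair f a b t 𝒜 ℬ T) (ha : a ≤ ν) (hb : b ≤ ν) (htb : 2 * t < b)
    (hdim : a + b + t + 5 ≤ 2 * ν) (hrank : finrank K (coverSpan f t ℬ T) = t + 1) :
    4 * (𝒜.ncard * ℬ.ncard : ℝ) ≤ 3 * mainTerm q ν t a b := by
  have hq := two_le_natCard K
  have hleft := h.ncard_left_le hf ha (by lia) hrank
  have hright := h.ncard_right_le_of_finrank_eq_succ hf hb hrank
  have hstep := pow_mul_qNum_mul_isotropicCount_succ_le hq (ν := ν) (a := t + 1) (m := a)
    (e := t + 3) (n := b + 1 - t) ha (by lia)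
  have hGg : 2 * qNum q (t + 1) ≤ qNum q (b + 1 - t) := two_mul_qNum_le hq (by lia)
  have hgpow := qNum_le_pow hq (t + 1)
  have hp := isotropicCount_nonneg (by linarith : 1 ≤ q) ν (t + 1) a
  have hs := isotropicCount_nonneg (by linarith : 1 ≤ q) ν (t + 2) a
  have hR := isotropicCount_nonneg (by linarith : 1 ≤ q) ν t b
  have hg := qNum_nonneg (by linarith : 0 ≤ q) (t + 1)
  rw [qNum_one] at hleft
  unfold mainTerm
  set G := qNum q (b + 1 - t)
  set g := qNum q (t + 1)
  set p := isotropicCount q ν (t + 1) a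
  set s := isotropicCount q ν (t + 2) a
  have hG : 0 ≤ G := by linarith
  have hdecay : 4 * (g * (G * s)) ≤ p :=
    calc 4 * (g * (G * s)) ≤ q ^ 2 * (q ^ (t + 1) * (G * s)) := by
          gcongr
          nlinarith
      _ = q ^ (t + 3) * (G * s) := by ring
      _ ≤ p := hstep
  have hleft' : (𝒜.ncard : ℝ) ≤ p + G * (G * s) := by nlinarith [mul_nonneg hG hs]
  calc 4 * (𝒜.ncard * ℬ.ncard : ℝ) ≤ 4 * ((p + G * (G * s)) * (g * isotropicCount q ν t b)) := by
        gcongr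
    _ = (2 * (2 * g) * p + G * (4 * (g * (G * s)))) * isotropicCount q ν t b := by ring
    _ ≤ (2 * G * p + G * p) * isotropicCount q ν t b := by gcongr
    _ = 3 * (G * p * isotropicCount q ν t b) := by ring

theorem four_mul_ncard_mul_ncard_le_of_two_le (hf : IsSymplectic f ν)
    (h : IsStarPair f a b t 𝒜 ℬ T) (ha : a ≤ ν) (hb : b ≤ ν) (htb : t ≤ b)
    (hadim : a + b + 5 ≤ 2 * ν) (hbdim : 2 * t + b + 5 ≤ 2 * ν) {k : ℕ} (hk : 2 ≤ k)
    (hkb : k + t ≤ b) (hrank : finrank K (coverSpan f t ℬ T) = t + k) :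
    4 * (𝒜.ncard * ℬ.ncard : ℝ) ≤ 3 * mainTerm q ν t a b := by
  have hq := two_le_natCard K
  have hq₃ : 8 ≤ q ^ 3 := by
    calc (8 : ℝ) = 2 ^ 3 := by norm_num
      _ ≤ q ^ 3 := by gcongr
  have hleft := h.ncard_left_le hf ha htb hrank
  have hright := h.ncard_right_le_of_two_le hf hb (by lia)
  have hdecay := pow_mul_qNum_mul_isotropicCount_succ_le hq (ν := ν) (a := t + 1) (m := a)
    (e := 3) (n := b + 1 - t) ha (by lia)
  have hdecay' := pow_mul_qNum_mul_isotropicCount_succ_le hq (ν := ν) (a := t) (m := b)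
    (e := 3) (n := t + 2) hb (by lia)
  have hGg : 2 * qNum q k ≤ qNum q (b + 1 - t) := two_mul_qNum_le hq (by lia)
  have hg := qNum_nonneg (by linarith : 0 ≤ q) k
  have hp := isotropicCount_nonneg (by linarith : 1 ≤ q) ν (t + 1) a
  have hR := isotropicCount_nonneg (by linarith : 1 ≤ q) ν t b
  have hs := mul_nonneg (qNum_nonneg (by linarith : 0 ≤ q) (b + 1 - t))
    (isotropicCount_nonneg (by linarith : 1 ≤ q) ν (t + 2) a)
  have hu := mul_nonneg (qNum_nonneg (by linarith : 0 ≤ q) (t + 2))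
    (isotropicCount_nonneg (by linarith : 1 ≤ q) ν (t + 1) b)
  unfold mainTerm
  set G := qNum q (b + 1 - t)
  set p := isotropicCount q ν (t + 1) a
  set s := G * isotropicCount q ν (t + 2) a
  have hs₈ : 8 * s ≤ p := (mul_le_mul_of_nonneg_right hq₃ hs).trans hdecay
  have hleft' : (𝒜.ncard : ℝ) ≤ 5 / 8 * (G * p) := by nlinarith [mul_nonneg hg hs]
  have hright' : (ℬ.ncard : ℝ) ≤ 9 / 8 * isotropicCount q ν t b := by
    linarith [(mul_le_mul_of_nonneg_right hq₃ hu).trans hdecay']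
  have hmain : 0 ≤ G * p * isotropicCount q ν t b :=
    mul_nonneg (mul_nonneg (by linarith) hp) hR
  linarith [mul_le_mul hleft' hright' (Nat.cast_nonneg _) ((Nat.cast_nonneg _).trans hleft')]

theorem mul_ncard_mul_ncard_le_of_finrank_eq (hf : IsSymplectic f ν)
    (h : IsStarPair f a b t 𝒜 ℬ T) (ha : a ≤ ν) (hb : b ≤ ν) (hta : t ≤ a) (htb : t + 1 ≤ b)
    (hdim : a + b + t + 6 ≤ 2 * ν) (hrank : finrank K (coverSpan f t ℬ T) = b + 1) :
    16 * q ^ (a - t) * (𝒜.ncard * ℬ.ncard : ℝ) ≤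
      (16 * q ^ (a - t) + 1) * mainTerm q ν t a b := by
  have hq := two_le_natCard K
  have hleft := h.ncard_left_le hf ha (by lia) (k := b + 1 - t) (by lia)
  rw [sub_self, zero_mul, add_zero] at hleft
  have hright := h.ncard_right_le_of_two_le hf hb (by lia)
  have hdecay : 16 * q ^ (a - t) * (qNum q (t + 2) * isotropicCount q ν (t + 1) b) ≤
      isotropicCount q ν t b :=
    sixteen_mul_pow_mul_qNum_mul_isotropicCount_succ_le hq hb (by lia)
  have hright' : 16 * q ^ (a - t) * (ℬ.ncard : ℝ) ≤
      (16 * q ^ (a - t) + 1) * isotropicCount q ν t b := by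
    have := mul_le_mul_of_nonneg_left hright (by positivity : 0 ≤ 16 * q ^ (a - t))
    linarith
  have := mul_le_mul hleft hright' (by positivity) ((Nat.cast_nonneg _).trans hleft)
  unfold mainTerm
  linarith

end IsStarPair

theorem IsMaxPair.mul_isotropicCount_add_pow_le (hf : IsSymplectic f ν)
    (h : IsMaxPair f a b t 𝒜 ℬ) (ht : 0 < t) (ha : a ≤ ν) (hb : b + 1 ≤ ν) {n : ℕ} (hn : 1 ≤ n)
    (htb : b = t + n) :
    qNum q (n + 1) * (isotropicCount q ν (t + 1) a -
      q * qNum q n / (q + 1) * isotropicCount q ν (t + 2) a) *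
      (isotropicCount q ν t b + q ^ b) ≤ 𝒜.ncard * ℬ.ncard := by
  obtain ⟨M, hM⟩ := polar_nonempty hf hb
  obtain ⟨T, hTM, hT⟩ := exists_le_finrank_eq (by rw [hM.2]; lia : t ≤ finrank K M)
  have hC1 := le_ncard_C1 hf ha hM.1 hTM hT (n := n) (by rw [hM.2, htb, add_assoc])
  have hC2 := isotropicCount_add_pow_le_ncard_C2 hf (by lia) hM hTM fun hbot => by
    rw [hbot, finrank_bot] at hT
    lia
  rw [hT] at hC2
  refine (mul_le_mul hC1 hC2 ?_ (Nat.cast_nonneg _)).trans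
    (h.ncard_C1_mul_ncard_C2_le hf ht (by lia) (by lia) (by lia) hM hTM hT)
  exact add_nonneg (isotropicCount_nonneg (one_lt_natCard K).le ..) (by positivity)

theorem IsMaxPair.sub_one_mul_mainTerm_le (hf : IsSymplectic f ν) (h : IsMaxPair f a b t 𝒜 ℬ)
    (ht : 0 < t) (ha : a ≤ ν) (htb : t + 1 ≤ b) (hb : b + 1 ≤ ν)
    (hdim : a + 2 * b + 5 ≤ 2 * ν + t) :
    (16 * q ^ (b - t) - 1) * mainTerm q ν t a b ≤
      16 * q ^ (b - t) * (𝒜.ncard * ℬ.ncard) := by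
  have hq := two_le_natCard K
  obtain ⟨n, rfl⟩ := Nat.exists_eq_add_of_le (by lia : t ≤ b)
  have hlower := h.mul_isotropicCount_add_pow_le hf ht ha hb (by lia) rfl
  have hG := qNum_nonneg (by linarith : 0 ≤ q) (n + 1)
  have hGn := qNum_nonneg (by linarith : 0 ≤ q) n
  have hs := isotropicCount_nonneg (by linarith : 1 ≤ q) ν (t + 2) a
  have hR := isotropicCount_nonneg (by linarith : 1 ≤ q) ν t (t + n)
  have hx : 1 ≤ q ^ n := one_le_pow₀ (by linarith)
  have hfrac : q * qNum q n / (q + 1) ≤ qNum q n := by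
    rw [div_le_iff₀ (by linarith)]
    nlinarith
  have hdecay : 16 * q ^ n * (q * qNum q n / (q + 1) * isotropicCount q ν (t + 2) a) ≤
      isotropicCount q ν (t + 1) a :=
    calc _ ≤ 16 * q ^ n * (qNum q n * isotropicCount q ν (t + 2) a) := by gcongr
      _ ≤ _ := sixteen_mul_pow_mul_qNum_mul_isotropicCount_succ_le hq ha (by lia)
  rw [mainTerm, show t + n + 1 - t = n + 1 by lia, Nat.add_sub_cancel_left]
  set p := isotropicCount q ν (t + 1) a
  set D := q * qNum q n / (q + 1) * isotropicCount q ν (t + 2) a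
  have hD : 0 ≤ D := by positivity
  have hpD : 0 ≤ p - D := by nlinarith
  calc (16 * q ^ n - 1) * (qNum q (n + 1) * p * isotropicCount q ν t (t + n))
      = qNum q (n + 1) * (16 * q ^ n * p - p) * isotropicCount q ν t (t + n) := by ring
    _ ≤ qNum q (n + 1) * (16 * q ^ n * p - 16 * q ^ n * D) *
          (isotropicCount q ν t (t + n) + q ^ (t + n)) := by
        gcongr
        · rw [← mul_sub]
          positivity
        · exact le_add_of_nonneg_right (by positivity)
    _ = 16 * q ^ n * (qNum q (n + 1) * (p - D) *
          (isotropicCount q ν t (t + n) + q ^ (t + n))) := by ring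
    _ ≤ _ := by gcongr

end Comparison

section LinesAndPlanes

theorem isotropicCount_self_succ {q : ℝ} (hq : 1 < q) (ν m : ℕ) :
    isotropicCount q ν m (m + 1) = qNum q (2 * (ν - m)) := by
  have h := isotropicCount_mul_pow_sub_one hq ν (Nat.lt_add_one m)
  rw [Nat.add_sub_cancel_left, pow_one, isotropicCount_self, mul_one, ← qNum_mul_sub_one] at h
  exact mul_right_cancel₀ (sub_pos.2 hq).ne' h

theorem isotropicCount_one_two {q : ℝ} (hq : 1 < q) {ν : ℕ} (hν : 2 ≤ ν) :
    isotropicCount q ν 1 2 = q ^ 2 * isotropicCount q ν 2 3 + q + 1 := by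
  rw [isotropicCount_self_succ hq, isotropicCount_self_succ hq,
    show 2 * (ν - 1) = 2 * (ν - 2) + 1 + 1 by lia, qNum_succ, qNum_succ]
  ring

theorem sixteen_mul_pow_three_le_isotropicCount {q : ℝ} (hq : 2 ≤ q) {ν : ℕ} (hν : 6 ≤ ν) :
    16 * q ^ 3 ≤ isotropicCount q ν 2 3 := by
  have hq₀ : 0 ≤ q := by linarith
  calc 16 * q ^ 3 = 2 ^ 4 * q ^ 3 := by norm_num
    _ ≤ q ^ 4 * q ^ 3 := by gcongr
    _ = q ^ 7 := by ring
    _ ≤ qNum q 8 := pow_le_qNum_succ hq₀ 7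
    _ ≤ qNum q (2 * (ν - 2)) := qNum_mono hq₀ (by lia)
    _ = isotropicCount q ν 2 3 := (isotropicCount_self_succ (by linarith) ν 2).symm

local notation "q" => (Nat.card K : ℝ)

variable {f : V →ₗ[K] V →ₗ[K] K} {a b ν : ℕ} {𝒜 ℬ : Set (Submodule K V)}
  {A T : Submodule K V}

theorem IsStarPair.not_isTCover_span_singleton [FiniteDimensional K V]
    (h : IsStarPair f a b 1 𝒜 ℬ T)
    (hrank : finrank K (coverSpan f 1 ℬ T) = 2) (hA : A ∈ 𝒜) (hSA : ¬ coverSpan f 1 ℬ T ≤ A)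
    {v : V} (hvS : v ∈ coverSpan f 1 ℬ T) (hvT : v ∉ T) :
    ¬ IsTCover f 1 𝒜 (Submodule.span K {v}) := by
  intro hcover
  have hv : v ≠ 0 := fun hv => hvT (hv ▸ T.zero_mem)
  have hvA : Submodule.span K {v} ≤ A := hcover.le_of_finrank_eq (finrank_span_singleton hv) hA
  have hsup : T ⊔ Submodule.span K {v} = coverSpan f 1 ℬ T := by
    refine Submodule.eq_of_le_of_finrank_le
      (sup_span_singleton_le_iff.2 ⟨h.center_le_coverSpan, hvS⟩) ?_
    rw [hrank, Submodule.finrank_sup_span_singleton hvT, h.center_mem.2]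
  exact hSA (hsup ▸ sup_le (h.center_le A hA) hvA)

variable [Finite V] [Finite K]

theorem IsStarPair.ncard_sdiff_through_le (hf : IsSymplectic f ν) (hb : b ≤ ν)
    (h : IsStarPair f a b 1 𝒜 ℬ T) (ha : 1 ≤ a) (hrank : finrank K (coverSpan f 1 ℬ T) = 2)
    (hA : A ∈ 𝒜) (hSA : ¬ coverSpan f 1 ℬ T ≤ A) :
    ((ℬ \ through ℬ T).ncard : ℝ) ≤ qNum q 2 * (qNum q a * isotropicCount q ν 2 b) := by
  have hcover := h.isTCover_coverSpan hrank
  have hc₀ : 0 ≤ qNum q a * isotropicCount q ν 2 b :=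
    mul_nonneg (qNum_nonneg (Nat.cast_nonneg _) _)
      (isotropicCount_nonneg (one_lt_natCard K).le _ _ _)
  rw [← through_eq_self_iff.2 fun B (_ : B ∈ ℬ \ through ℬ T) => bot_le (a := B),
    show 2 = finrank K (coverSpan f 1 ℬ T) + 1 - 1 by lia]
  refine ncard_through_le_qNum_mul (by simpa [hrank] using hc₀)
    (fun B hB => inf_comm B _ ▸ hcover.2 B hB.1.1) (by simp) (by lia) fun v hvS hv => ?_
  rw [bot_sup_eq]
  by_cases hvT : v ∈ T
  · have hspan : Submodule.span K {v} = T :=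
      Submodule.eq_of_le_of_finrank_le ((Submodule.span_singleton_le_iff_mem v T).2 hvT)
        (by rw [h.center_mem.2, finrank_span_singleton hv])
    have hempty : through (ℬ \ through ℬ T) T = ∅ :=
      Set.eq_empty_of_forall_notMem fun B hB => hB.1.2 ⟨hB.1.1, hB.2⟩
    rw [hspan, hempty, Set.ncard_empty, Nat.cast_zero]
    simpa [hrank] using hc₀
  · have hle := ncard_through_le_of_not_isTCover h.symm ha
      (h.not_isTCover_span_singleton hrank hA hSA hvS hvT)
      (isotropicCount_nonneg (one_lt_natCard K).le ν 2 b) fun w hw => by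
        simpa [finrank_span_singleton hv] using
          ncard_through_sup_span_le hf hb h.right_subset hw
    have hmono := Set.ncard_le_ncard (through_mono (Set.sdiff_subset (s := ℬ) (t := through ℬ T))
      (Submodule.span K {v}))
    simpa [hrank] using (Nat.cast_le.2 hmono).trans hle

theorem IsMaxPair.add_one_mul_sub_mul_add_sq_le (hf : IsSymplectic f ν)
    (h : IsMaxPair f a 2 1 𝒜 ℬ) (ha : a ≤ ν) (hν : 3 ≤ ν) :
    ((q + 1) * isotropicCount q ν 2 a - q * isotropicCount q ν 3 a) *
      (isotropicCount q ν 1 2 + q ^ 2) ≤ 𝒜.ncard * ℬ.ncard := by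
  have hle := h.mul_isotropicCount_add_pow_le hf one_pos ha hν le_rfl rfl
  have hq : q + 1 ≠ 0 := by positivity
  rwa [one_add_one_eq_two, qNum_two, qNum_one, mul_one, mul_sub, ← mul_assoc,
    mul_div_cancel₀ _ hq] at hle

namespace IsStarPair

theorem finrank_coverSpan_ne_two_of_lines (hf : IsSymplectic f ν)
    (hstar : IsStarPair f 2 2 1 𝒜 ℬ T) (h : IsMaxPair f 2 2 1 𝒜 ℬ) (hν : 3 ≤ ν) :
    finrank K (coverSpan f 1 ℬ T) ≠ 2 := by
  intro hrank
  have hq := two_le_natCard K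
  have hleft := hstar.ncard_left_le hf (k := 1) (by lia) (by lia) hrank
  have hright := hstar.ncard_right_le_of_finrank_eq_succ hf (by lia) hrank
  have hlower := h.add_one_mul_sub_mul_add_sq_le hf (by lia) hν
  rw [isotropicCount_of_lt q ν (by lia : 2 < 1 + 2), isotropicCount_self, qNum_one, mul_one,
    mul_zero, mul_zero, add_zero] at hleft
  rw [isotropicCount_of_lt q ν (by lia : 2 < 3), isotropicCount_self, mul_one, mul_zero,
    sub_zero] at hlower
  rw [qNum_two] at hright
  have hupper := mul_le_mul hleft hright (Nat.cast_nonneg _) zero_le_one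
  have hgain : 0 < (q + 1) * q ^ 2 := by positivity
  linarith

theorem ncard_mul_ncard_lt_of_forall_le (hf : IsSymplectic f ν)
    (h : IsStarPair f 3 2 1 𝒜 ℬ T) (hν : 6 ≤ ν) (hrank : finrank K (coverSpan f 1 ℬ T) = 2)
    (hS : ∀ A ∈ 𝒜, coverSpan f 1 ℬ T ≤ A) :
    (𝒜.ncard * ℬ.ncard : ℝ) < ((q + 1) * isotropicCount q ν 2 3 - q) *
      (isotropicCount q ν 1 2 + q ^ 2) := by
  have hq := two_le_natCard K
  have hleft := ncard_through_le hf (by lia) h.left_subset (coverSpan f 1 ℬ T)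
  rw [through_eq_self_iff.2 hS, hrank] at hleft
  have hright := h.ncard_right_le_of_finrank_eq_succ hf (by lia) hrank
  rw [qNum_two, isotropicCount_one_two (by linarith) (by lia)] at hright
  rw [isotropicCount_one_two (by linarith) (by lia)]
  have hp := sixteen_mul_pow_three_le_isotropicCount hq hν
  set p := isotropicCount q ν 2 3
  have hupper := mul_le_mul hleft hright (Nat.cast_nonneg _) ((Nat.cast_nonneg _).trans hleft)
  have hq₂ : 2 * q ≤ q ^ 2 := by nlinarith
  have hq₃ : 2 * q ^ 2 ≤ q ^ 3 := by nlinarith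
  have hp₄ : 4 * p ≤ q ^ 2 * p := by nlinarith
  linarith

theorem ncard_mul_ncard_lt_of_not_le (hf : IsSymplectic f ν)
    (h : IsStarPair f 3 2 1 𝒜 ℬ T) (hν : 6 ≤ ν) (hrank : finrank K (coverSpan f 1 ℬ T) = 2)
    (hA : A ∈ 𝒜) (hSA : ¬ coverSpan f 1 ℬ T ≤ A) :
    (𝒜.ncard * ℬ.ncard : ℝ) < ((q + 1) * isotropicCount q ν 2 3 - q) *
      (isotropicCount q ν 1 2 + q ^ 2) := by
  have hq := two_le_natCard K
  have hleft := h.ncard_left_le hf (k := 1) (by lia) (by lia) hrank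
  have hsdiff := h.ncard_sdiff_through_le hf (by lia) (by lia) hrank hA hSA
  have hthrough := ncard_through_le hf (by lia) h.right_subset T
  have hright : ((ℬ \ through ℬ T).ncard + (through ℬ T).ncard : ℝ) = ℬ.ncard := by
    exact_mod_cast Set.ncard_sdiff_add_ncard_of_subset (through_subset ℬ T)
  have hp := sixteen_mul_pow_three_le_isotropicCount hq hν
  have hR := isotropicCount_one_two (by linarith : 1 < q) (by lia : 2 ≤ ν)
  rw [h.center_mem.2] at hthrough
  simp only [Nat.reduceAdd, Nat.add_one_sub_one, isotropicCount_self, qNum_succ q 2, qNum_two,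
    qNum_one, one_mul, mul_one] at hleft hsdiff
  set p := isotropicCount q ν 2 3
  set R := isotropicCount q ν 1 2
  have hq₂ : 2 * q ≤ q ^ 2 := by nlinarith
  have hq₃ : 2 * q ^ 2 ≤ q ^ 3 := by nlinarith
  have hp₄ : 4 * p ≤ q ^ 2 * p := by nlinarith
  have hA' : (𝒜.ncard : ℝ) ≤ 5 / 4 * p := by linarith
  have hB' : (ℬ.ncard : ℝ) ≤ 5 / 4 * R := by linarith
  have hp₀ : 0 < p := by linarith
  have hR₀ : 0 < R := by linarith
  have hfactor : 2 * p ≤ (q + 1) * p - q := by nlinarith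
  calc (𝒜.ncard * ℬ.ncard : ℝ) ≤ (5 / 4 * p) * (5 / 4 * R) := by gcongr
    _ < 2 * p * (R + q ^ 2) := by nlinarith
    _ ≤ _ := by gcongr

theorem finrank_coverSpan_ne_two_of_planes (hf : IsSymplectic f ν)
    (hstar : IsStarPair f 3 2 1 𝒜 ℬ T) (h : IsMaxPair f 3 2 1 𝒜 ℬ) (hν : 6 ≤ ν) :
    finrank K (coverSpan f 1 ℬ T) ≠ 2 := by
  intro hrank
  have hlower := h.add_one_mul_sub_mul_add_sq_le hf (by lia) (by lia)
  rw [isotropicCount_self, mul_one] at hlower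
  by_cases hS : ∀ A ∈ 𝒜, coverSpan f 1 ℬ T ≤ A
  · exact (hstar.ncard_mul_ncard_lt_of_forall_le hf hν hrank hS).not_ge hlower
  · push Not at hS
    obtain ⟨A, hA, hSA⟩ := hS
    exact (hstar.ncard_mul_ncard_lt_of_not_le hf hν hrank hA hSA).not_ge hlower

end IsStarPair

end LinesAndPlanes

section Main

theorem eq_and_eq_of_ncard_mul_ncard_le {α : Type*} [Finite α] {s s' t t' : Set α} (hs : s ⊆ s')
    (ht : t ⊆ t') (hs₀ : s.Nonempty) (ht₀ : t.Nonempty)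
    (h : s'.ncard * t'.ncard ≤ s.ncard * t.ncard) : s = s' ∧ t = t' := by
  have hs_le := Set.ncard_le_ncard hs
  have ht_le := Set.ncard_le_ncard ht
  have hs_pos := (Set.ncard_pos s.toFinite).2 hs₀
  have ht_pos := (Set.ncard_pos t.toFinite).2 ht₀
  exact ⟨Set.eq_of_subset_of_ncard_le hs (by nlinarith),
    Set.eq_of_subset_of_ncard_le ht (by nlinarith)⟩

local notation "q" => (Nat.card K : ℝ)

variable {f : V →ₗ[K] V →ₗ[K] K} {a b t ν : ℕ} {𝒜 ℬ : Set (Submodule K V)}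
  {T : Submodule K V}

theorem IsCrossPair.exists_tauCover_eq [FiniteDimensional K V] (h : IsCrossPair f a b t 𝒜 ℬ)
    (h𝒜 : 𝒜.Nonempty) (hℬ : ℬ.Nonempty) : ∃ j, tauCover f t ℬ = t + j ∧ t + j ≤ a := by
  obtain ⟨A, hA⟩ := h𝒜
  have hcover := h.isTCover_right hA
  obtain ⟨S, hS, hSrank⟩ := hcover.exists_finrank_eq_tauCover
  have hle : tauCover f t ℬ ≤ a := by
    by_contra! hlt
    exact not_isTCover_of_finrank_lt ((h.left_subset hA).2 ▸ hlt) hcover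
  obtain ⟨j, hj⟩ := Nat.exists_eq_add_of_le (hSrank ▸ hS.le_finrank hℬ)
  exact ⟨j, hj, hj ▸ hle⟩

variable [Finite V]

namespace IsMaxPair

theorem through_polar_subset (h : IsMaxPair f a b t 𝒜 ℬ) (h𝒜 : 𝒜.Nonempty)
    (hT : finrank K T = t) (hT𝒜 : ∀ A ∈ 𝒜, T ≤ A) : through (polar f b) T ⊆ ℬ :=
  fun _ hB => h.mem_right h𝒜 hB.1 fun A hA =>
    hT ▸ Submodule.finrank_mono (le_inf (hT𝒜 A hA) hB.2)

theorem exists_center (h : IsMaxPair f a b t 𝒜 ℬ) (hℬ : ℬ.Nonempty)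
    (h𝒜τ : tauCover f t 𝒜 = t) : ∃ T ∈ polar f t, ∀ A ∈ 𝒜, T ≤ A := by
  obtain ⟨B, hB⟩ := hℬ
  obtain ⟨T, hT, hTrank⟩ := (h.symm.isTCover_right hB).exists_finrank_eq_tauCover
  rw [h𝒜τ] at hTrank
  exact ⟨T, ⟨hT.1, hTrank⟩, fun A hA => hT.le_of_finrank_eq hTrank hA⟩

variable [Finite K]

theorem tauCover_ne (hf : IsSymplectic f ν) (h : IsMaxPair f a b t 𝒜 ℬ) (h𝒜 : 𝒜.Nonempty)
    (hℬ : ℬ.Nonempty) (hb : b ≤ ν) (htb : t + 1 ≤ b) (hdim : 2 + t + b ≤ 2 * ν)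
    (h𝒜τ : tauCover f t 𝒜 = t) : tauCover f t ℬ ≠ t := by
  intro hℬτ
  obtain ⟨T, hT, hT𝒜⟩ := h.exists_center hℬ h𝒜τ
  obtain ⟨S, hS, hSℬ⟩ := h.symm.exists_center h𝒜 hℬτ
  obtain ⟨hTiso, hTrank⟩ := hT
  have hST : S ≤ T := le_of_forall_mem_through_polar hf hb hTiso (by lia) (by lia) fun B hB =>
    hSℬ B (h.through_polar_subset h𝒜 hTrank hT𝒜 hB)
  obtain rfl := Submodule.eq_of_le_of_finrank_le hST (by rw [hTrank, hS.2])
  exact h.nontrivial ⟨S, hS, hT𝒜, hSℬ⟩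

theorem exists_isStarPair (hf : IsSymplectic f ν) (h : IsMaxPair f a b t 𝒜 ℬ)
    (h𝒜 : 𝒜.Nonempty) (hℬ : ℬ.Nonempty) (hb : b ≤ ν) (htb : t + 1 ≤ b)
    (hdim : 2 + t + b ≤ 2 * ν) (h𝒜τ : tauCover f t 𝒜 = t) (hℬτ : tauCover f t ℬ = t + 1) :
    ∃ T, IsStarPair f a b t 𝒜 ℬ T := by
  obtain ⟨T, hT, hT𝒜⟩ := h.exists_center hℬ h𝒜τ
  obtain ⟨A, hA⟩ := h𝒜
  obtain ⟨S, hS, hSrank⟩ := (h.isTCover_right hA).exists_finrank_eq_tauCover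
  rw [hℬτ] at hSrank
  have hTS : T ≤ S := le_of_forall_le_finrank_inf hf hb hT htb hdim hSrank fun B hB =>
    inf_comm S B ▸ hS.2 B (h.through_polar_subset ⟨A, hA⟩ hT.2 hT𝒜 hB)
  refine ⟨T, h.toIsCrossPair, hT, hT𝒜, ?_, S, hSrank, hTS, hS⟩
  by_contra! hTℬ
  exact h.nontrivial ⟨T, hT, hT𝒜, hTℬ⟩

theorem three_mul_mainTerm_lt (hf : IsSymplectic f ν) (h : IsMaxPair f a b t 𝒜 ℬ) (ht : 0 < t)
    (ha : a ≤ ν) (hta : t + 1 ≤ a) (htb : t + 1 ≤ b) (hb : b + 1 ≤ ν)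
    (hdim : a + 2 * b + 5 ≤ 2 * ν + t) :
    3 * mainTerm q ν t a b < 4 * (𝒜.ncard * ℬ.ncard : ℝ) := by
  have hq := two_le_natCard K
  have hlower := h.sub_one_mul_mainTerm_le hf ht ha htb hb hdim
  have hmain := mainTerm_pos (by linarith : 1 < q) hta (by lia) ha (by lia : b ≤ ν)
  have hx : 1 ≤ q ^ (b - t) := one_le_pow₀ (by linarith)
  by_contra! hle
  nlinarith

theorem nonempty_and_nonempty (hf : IsSymplectic f ν) (h : IsMaxPair f a b t 𝒜 ℬ) (ht : 0 < t)
    (ha : a ≤ ν) (hta : t + 1 ≤ a) (htb : t + 1 ≤ b) (hb : b + 1 ≤ ν)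
    (hdim : a + 2 * b + 5 ≤ 2 * ν + t) : 𝒜.Nonempty ∧ ℬ.Nonempty := by
  have hlower := h.three_mul_mainTerm_lt hf ht ha hta htb hb hdim
  have hmain := mainTerm_pos (one_lt_natCard K) hta (by lia) ha (by lia : b ≤ ν)
  have hpos : 0 < 𝒜.ncard * ℬ.ncard := by
    exact_mod_cast (by linarith : (0 : ℝ) < 𝒜.ncard * ℬ.ncard)
  rw [CanonicallyOrderedAdd.mul_pos, Set.ncard_pos, Set.ncard_pos] at hpos
  exact hpos

theorem tauCover_eq_or (hf : IsSymplectic f ν) (h : IsMaxPair f a b t 𝒜 ℬ) (h𝒜 : 𝒜.Nonempty)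
    (hℬ : ℬ.Nonempty) (hta : t + 1 ≤ a) (htb : t + 1 ≤ b) (hadim : 2 * a + b + t + 3 ≤ 2 * ν)
    (hbdim : a + 2 * b + t + 3 ≤ 2 * ν)
    (hab : 3 * mainTerm q ν t a b < 4 * (𝒜.ncard * ℬ.ncard : ℝ))
    (hba : 3 * mainTerm q ν t b a < 4 * (𝒜.ncard * ℬ.ncard : ℝ)) :
    tauCover f t 𝒜 = t ∧ tauCover f t ℬ = t + 1 ∨
      tauCover f t ℬ = t ∧ tauCover f t 𝒜 = t + 1 := by
  have hq := two_le_natCard K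
  have ha : a ≤ ν := by lia
  have hb : b ≤ ν := by lia
  have hab₀ := mainTerm_pos (by linarith : 1 < q) hta (by lia) ha hb
  obtain ⟨i, hi, hib⟩ := h.symm.exists_tauCover_eq hℬ h𝒜
  obtain ⟨j, hj, hja⟩ := h.exists_tauCover_eq h𝒜 hℬ
  have hupper := h.ncard_mul_ncard_le hf ha hb (by lia) (by lia) h𝒜 hℬ hi hj
  obtain rfl | hi₁ := Nat.eq_zero_or_pos i <;> obtain rfl | hj₁ := Nat.eq_zero_or_pos j
  · exact absurd hj (h.tauCover_ne hf h𝒜 hℬ hb htb (by lia) hi)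
  · obtain rfl | hj₂ : j = 1 ∨ 2 ≤ j := by lia
    · exact Or.inl ⟨hi, hj⟩
    · have := two_mul_coverBound_mul_isotropicCount_le hq ha (by lia : t ≤ b) hj₂ (by lia) (by lia)
      rw [coverBound_zero (by linarith)] at hupper
      linarith
  · obtain rfl | hi₂ : i = 1 ∨ 2 ≤ i := by lia
    · exact Or.inr ⟨hj, hi⟩
    · have := two_mul_coverBound_mul_isotropicCount_le hq hb (by lia : t ≤ a) hi₂ (by lia) (by lia)
      rw [coverBound_zero (by linarith)] at hupper
      linarith
  · have := two_mul_coverBound_mul_coverBound_le hq ha hb (by lia : t ≤ a) (by lia) hi₁ hj₁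
      (by lia) (by lia) (by lia)
    linarith

end IsMaxPair

variable [Finite K]

theorem IsStarPair.finrank_coverSpan_eq (hf : IsSymplectic f ν) (hstar : IsStarPair f a b t 𝒜 ℬ T)
    (h : IsMaxPair f a b t 𝒜 ℬ) (ha : a ≤ ν) (hb : b ≤ ν) (hta : t + 1 ≤ a)
    (hdim : a + b + t + 5 ≤ 2 * ν) (hcase : 2 * t < b ∨ b = 2 ∧ t = 1 ∧ (a = 2 ∨ a = 3))
    (hlower : 3 * mainTerm q ν t a b < 4 * (𝒜.ncard * ℬ.ncard : ℝ)) :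
    finrank K (coverSpan f t ℬ T) = b + 1 := by
  obtain ⟨k, hk₁, hkb, hrank⟩ := hstar.exists_finrank_coverSpan
  by_contra hne
  obtain rfl | hk₂ : k = 1 ∨ 2 ≤ k := by lia
  · obtain htb | ⟨rfl, rfl, rfl | rfl⟩ := hcase
    · exact hlower.not_ge
        (hstar.four_mul_ncard_mul_ncard_le_of_finrank_eq_succ hf ha hb htb hdim hrank)
    · exact hstar.finrank_coverSpan_ne_two_of_lines hf h (by lia) hrank
    · exact hstar.finrank_coverSpan_ne_two_of_planes hf h (by lia) hrank
  · exact hlower.not_ge (hstar.four_mul_ncard_mul_ncard_le_of_two_le hf ha hb (by lia) (by lia)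
      (by lia) hk₂ (by lia) hrank)

theorem IsStarPair.eq_C1_and_eq_C2 (hf : IsSymplectic f ν) (hstar : IsStarPair f a b t 𝒜 ℬ T)
    (h : IsMaxPair f a b t 𝒜 ℬ) (h𝒜 : 𝒜.Nonempty) (hℬ : ℬ.Nonempty) (ht : 0 < t) (hb : b ≤ ν)
    (htb : t + 1 ≤ b) (hdim : 2 + t + b ≤ 2 * ν)
    (hrank : finrank K (coverSpan f t ℬ T) = b + 1) :
    𝒜 = C1 f (coverSpan f t ℬ T) T a t ∧ ℬ = C2 f (coverSpan f t ℬ T) T b :=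
  eq_and_eq_of_ncard_mul_ncard_le (hstar.left_subset_C1 hrank) (hstar.right_subset_C2 hrank)
    h𝒜 hℬ <| by
      exact_mod_cast h.ncard_C1_mul_ncard_C2_le hf ht hb htb hdim
        (hstar.coverSpan_mem_polar hf.alt hrank) hstar.center_le_coverSpan hstar.center_mem.2

theorem IsMaxPair.finrank_coverSpan_ne_of_lt (hf : IsSymplectic f ν) (h : IsMaxPair f a b t 𝒜 ℬ)
    (hstar : IsStarPair f b a t ℬ 𝒜 T) (ht : 0 < t) (htb : t + 1 ≤ b) (hba : b < a)
    (hdim : 2 * a + b + t + 3 ≤ 2 * ν) : finrank K (coverSpan f t 𝒜 T) ≠ a + 1 := by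
  intro hrank
  have hq := two_le_natCard K
  have hupper := hstar.mul_ncard_mul_ncard_le_of_finrank_eq hf (by lia) (by lia) (by lia)
    (by lia) (by lia) hrank
  have hswap := mul_mainTerm_le_mul_mainTerm_swap hq (ν := ν) (by lia : t < b) hba
  have hlower := h.sub_one_mul_mainTerm_le hf ht (by lia) htb (by lia) (by lia)
  have hmain := mainTerm_pos (by linarith : 1 < q) (by lia : t + 1 ≤ a) (by lia : t ≤ b)
    (by lia : a ≤ ν) (by lia)
  have hx : 1 ≤ q ^ (b - t) := one_le_pow₀ (by linarith)
  rw [mul_comm (ℬ.ncard : ℝ)] at hupper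
  set x := q ^ (b - t)
  have : 4 * x * ((16 * x - 1) * mainTerm q ν t a b) ≤
      (16 * x + 1) * ((4 * x - 1) * mainTerm q ν t a b) :=
    calc 4 * x * ((16 * x - 1) * mainTerm q ν t a b)
        ≤ 4 * x * ((16 * x + 1) * mainTerm q ν t b a) :=
          mul_le_mul_of_nonneg_left (hlower.trans hupper) (by linarith)
      _ = (16 * x + 1) * (4 * x * mainTerm q ν t b a) := by ring
      _ ≤ _ := by gcongr
  nlinarith

theorem stmt_3_general (hf : IsSymplectic f ν) {m₁ m₂ : ℕ} {ℱ₁ ℱ₂ : Set (Submodule K V)}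
    (ht : 0 < t) (hm : m₂ ≤ m₁) (hmt : t + 1 ≤ m₂) (hdim : 2 * m₁ + m₂ + t + 3 ≤ 2 * ν)
    (hcase : 2 * t < m₂ ∨ (m₁, m₂, t) = (2, 2, 1) ∨ (m₁, m₂, t) = (3, 2, 1))
    (h : IsMaxPair f m₁ m₂ t ℱ₁ ℱ₂) :
    ∃ M ∈ polar f (m₂ + 1), ∃ T : Submodule K V, T ≤ M ∧ finrank K T = t ∧
      ((ℱ₁ = C1 f M T m₁ t ∧ ℱ₂ = C2 f M T m₂) ∨
        (m₁ = m₂ ∧ ℱ₁ = C2 f M T m₁ ∧ ℱ₂ = C1 f M T m₂ t)) := by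
  have hq := two_le_natCard K
  rw [Prod.mk.injEq, Prod.mk.injEq, Prod.mk.injEq, Prod.mk.injEq] at hcase
  have hlower := h.three_mul_mainTerm_lt hf ht (by lia) (by lia) hmt (by lia) (by lia)
  have hlower' : 3 * mainTerm q ν t m₂ m₁ < 4 * (ℱ₁.ncard * ℱ₂.ncard : ℝ) := by
    linarith [mainTerm_le_mainTerm_swap hq (by lia : t < m₂) hm (by lia : m₁ ≤ ν)]
  obtain ⟨hℱ₁, hℱ₂⟩ := h.nonempty_and_nonempty hf ht (by lia) (by lia) hmt (by lia) (by lia)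
  obtain ⟨hτ₁, hτ₂⟩ | ⟨hτ₂, hτ₁⟩ := h.tauCover_eq_or hf hℱ₁ hℱ₂ (by lia) hmt hdim (by lia)
    hlower hlower'
  · obtain ⟨T, hstar⟩ := h.exists_isStarPair hf hℱ₁ hℱ₂ (by lia) hmt (by lia) hτ₁ hτ₂
    have hrank := hstar.finrank_coverSpan_eq hf h (by lia) (by lia) (by lia) (by lia)
      (by lia) hlower
    exact ⟨_, hstar.coverSpan_mem_polar hf.alt hrank, T, hstar.center_le_coverSpan,
      hstar.center_mem.2,
      Or.inl (hstar.eq_C1_and_eq_C2 hf h hℱ₁ hℱ₂ ht (by lia) hmt (by lia) hrank)⟩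
  · obtain ⟨T, hstar⟩ := h.symm.exists_isStarPair hf hℱ₂ hℱ₁ (by lia) (by lia) (by lia) hτ₂ hτ₁
    have hrank := hstar.finrank_coverSpan_eq hf h.symm (by lia) (by lia) hmt (by lia)
      (by lia) (by rwa [mul_comm (ℱ₂.ncard : ℝ)])
    obtain rfl | hlt := hm.eq_or_lt
    · obtain ⟨hC1, hC2⟩ := hstar.eq_C1_and_eq_C2 hf h.symm hℱ₂ hℱ₁ ht (by lia) hmt (by lia) hrank
      exact ⟨_, hstar.coverSpan_mem_polar hf.alt hrank, T, hstar.center_le_coverSpan,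
        hstar.center_mem.2, Or.inr ⟨rfl, hC2, hC1⟩⟩
    · exact absurd hrank (h.finrank_coverSpan_ne_of_lt hf hstar ht hmt hlt hdim)

end Main

theorem stmt_3
    (q ν m₁ m₂ t : ℕ) (hq : IsPrimePow q)
    {K : Type} [Field K] [Fintype K] (hK : Fintype.card K = q)
    (f : (Fin (2 * ν) → K) →ₗ[K] (Fin (2 * ν) → K) →ₗ[K] K)
    (halt : ∀ x, f x x = 0)
    (hnd : ∀ x, (∀ y, f x y = 0) → x = 0)
    (hν : 0 < ν) (ht : 0 < t)
    (hm : m₂ ≤ m₁) (hmt : t + 1 ≤ m₂) (hdim : 2 * m₁ + m₂ + t + 3 ≤ 2 * ν)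
    (hcase : 2 * t < m₂ ∨ (m₁, m₂, t) = (2, 2, 1) ∨ (m₁, m₂, t) = (3, 2, 1))
    (ℱ₁ ℱ₂ : Set (Submodule K (Fin (2 * ν) → K)))
    (h1 : ℱ₁ ⊆ polar f m₁) (h2 : ℱ₂ ⊆ polar f m₂)
    (hcross : ∀ F₁ ∈ ℱ₁, ∀ F₂ ∈ ℱ₂, t ≤ finrank K ↥(F₁ ⊓ F₂))
    (hnt : ¬ ∃ T ∈ polar f t, (∀ F ∈ ℱ₁, T ≤ F) ∧ (∀ F ∈ ℱ₂, T ≤ F))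
    (hmax : ∀ 𝒢₁ 𝒢₂ : Set (Submodule K (Fin (2 * ν) → K)),
      𝒢₁ ⊆ polar f m₁ → 𝒢₂ ⊆ polar f m₂ →
      (∀ G₁ ∈ 𝒢₁, ∀ G₂ ∈ 𝒢₂, t ≤ finrank K ↥(G₁ ⊓ G₂)) →
      (¬ ∃ T ∈ polar f t, (∀ F ∈ 𝒢₁, T ≤ F) ∧ (∀ F ∈ 𝒢₂, T ≤ F)) →
      𝒢₁.ncard * 𝒢₂.ncard ≤ ℱ₁.ncard * ℱ₂.ncard) :
    ∃ M ∈ polar f (m₂ + 1), ∃ T : Submodule K (Fin (2 * ν) → K),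
      T ≤ M ∧ finrank K T = t ∧
      ((ℱ₁ = C1 f M T m₁ t ∧ ℱ₂ = C2 f M T m₂) ∨
        (m₁ = m₂ ∧ ℱ₁ = C2 f M T m₁ ∧ ℱ₂ = C1 f M T m₂ t)) := by
  have hf : IsSymplectic f ν := ⟨halt, hnd, by simp⟩
  exact stmt_3_general hf ht hm hmt hdim hcase
    ⟨⟨⟨h1, h2, hcross⟩, hnt⟩, fun 𝒢 ℋ h =>
      hmax 𝒢 ℋ h.left_subset h.right_subset h.le_finrank_inf h.nontrivial⟩

end
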